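/- Let n ≥ 1 be an integer, θ ∈ (0, π/2) and 1 ≤ k ≤ n. If s is a smooth capillary function on C_θ with τ[s] > 0, then ∫_{C_θ} σ_k(τ[s])(ζ) · ζ_i dσ(ζ) = 0 for every i = 1,…,n. -/

import Mathlib

open MeasureTheory Real Set
open scoped RealInnerProductSpace

noncomputable section

abbrev V (n : ℕ) := EuclideanSpace ℝ (Fin (n + 1))

/-- The vertical unit vector `E_{n+1}`. -/
def Etop (n : ℕ) : V n := EuclideanSpace.single (Fin.last n) 1

/-- The spherical cap `S^n_θ`. -/
def sphCap (n : ℕ) (θ : ℝ) : Set (V n) :=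
  {u | ‖u‖ = 1 ∧ Real.cos θ ≤ u (Fin.last n)}

/-- The boundary circle `∂S^n_θ`. -/
def sphCapBdry (n : ℕ) (θ : ℝ) : Set (V n) :=
  {u | ‖u‖ = 1 ∧ u (Fin.last n) = Real.cos θ}

/-- The capillary cap `C_θ`. -/
def capCap (n : ℕ) (θ : ℝ) : Set (V n) :=
  {ζ | 0 ≤ ζ (Fin.last n) ∧ ‖ζ + Real.cos θ • Etop n‖ = 1}

/-- The open cone over `S^n_θ`. -/
def coneCap (n : ℕ) (θ : ℝ) : Set (V n) :=
  {x | ∃ l : ℝ, 0 < l ∧ ∃ u ∈ sphCap n θ, x = l • u}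

/-- `G` is a positively 1-homogeneous extension of `g : C_θ → ℝ` which is `C^m` on an
open neighborhood of the cone over `S^n_θ`. -/
def IsHomExt (n : ℕ) (θ : ℝ) (m : ℕ∞) (g G : V n → ℝ) : Prop :=
  (∃ U : Set (V n), IsOpen U ∧ coneCap n θ ⊆ U ∧ ContDiffOn ℝ m G U) ∧
  (∀ l : ℝ, 0 < l → ∀ u ∈ sphCap n θ, G (l • u) = l * G u) ∧
  (∀ ζ ∈ capCap n θ, G (ζ + Real.cos θ • Etop n) = g ζ)

/-- The Hessian of `G` at `u` as a quadratic/bilinear form. -/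
def hessQ (n : ℕ) (G : V n → ℝ) (u v w : V n) : ℝ :=
  fderiv ℝ (fderiv ℝ G) u v w

/-- The Hessian matrix `D²G(u)` in the standard coordinates. -/
def hessM (n : ℕ) (G : V n → ℝ) (u : V n) : Matrix (Fin (n + 1)) (Fin (n + 1)) ℝ :=
  fun i j => fderiv ℝ (fderiv ℝ G) u (EuclideanSpace.single i 1) (EuclideanSpace.single j 1)

/-- `σ_j` of the eigenvalues of `D²G(u)` (via characteristic polynomial coefficients). -/
def sigmaElem (n : ℕ) (j : ℕ) (G : V n → ℝ) (u : V n) : ℝ :=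
  (-1 : ℝ) ^ j * ((hessM n G u).charpoly.coeff (n + 1 - j))

/-- `τ[g] ≥ 0` : the Hessian of the extension is positive semidefinite on `S^n_θ`. -/
def TauNonneg (n : ℕ) (θ : ℝ) (G : V n → ℝ) : Prop :=
  ∀ u ∈ sphCap n θ, ∀ v : V n, 0 ≤ hessQ n G u v v

/-- `τ[g] > 0`. -/
def TauPos (n : ℕ) (θ : ℝ) (G : V n → ℝ) : Prop :=
  TauNonneg n θ G ∧
  ∀ u ∈ sphCap n θ, ∀ v : V n, v ≠ 0 → ⟪v, u⟫ = 0 → 0 < hessQ n G u v v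

/-- Capillary (Robin) boundary condition: `∂_{n+1}G = 0` on `∂S^n_θ`. -/
def IsCapillaryF (n : ℕ) (θ : ℝ) (G : V n → ℝ) : Prop :=
  ∀ u ∈ sphCapBdry n θ, fderiv ℝ G u (Etop n) = 0

/-- Reflection negating the horizontal coordinates. -/
def horizNeg (n : ℕ) (ζ : V n) : V n := (2 * ζ (Fin.last n)) • Etop n - ζ

/-- Support function of a set. -/
def suppFn (n : ℕ) (K : Set (V n)) (u : V n) : ℝ := sSup ((fun y => ⟪u, y⟫) '' K)

/-- Relative interior (within the hyperplane `{x_{n+1}=0}`) of the base `K ∩ {x_{n+1}=0}`. -/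
def relintBase (n : ℕ) (K : Set (V n)) : Set (V n) :=
  {x | x (Fin.last n) = 0 ∧ ∃ ε > 0, ∀ y : V n, y (Fin.last n) = 0 → ‖y - x‖ < ε → y ∈ K}

/-- A `θ`-capillary convex body. -/
def IsCapBody (n : ℕ) (θ : ℝ) (K : Set (V n)) : Prop :=
  IsCompact K ∧ Convex ℝ K ∧ (interior K).Nonempty ∧
  (∀ x ∈ K, 0 ≤ x (Fin.last n)) ∧
  (∀ x ∈ K, 0 < x (Fin.last n) → ∀ u : V n, ‖u‖ = 1 → ⟪u, x⟫ = suppFn n K u →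
    Real.cos θ ≤ u (Fin.last n)) ∧
  (∀ v : V n, ‖v‖ = 1 → v (Fin.last n) = 0 →
    suppFn n K (Real.sin θ • v + Real.cos θ • Etop n) = Real.sin θ * suppFn n K v) ∧
  (relintBase n K).Nonempty

/-- `ψ` is one of `x²`, `x^p (p<0)`, `-log x`. -/
def PsiOK (ψ : ℝ → ℝ) : Prop :=
  (ψ = fun x : ℝ => x ^ 2) ∨ (∃ p : ℝ, p < 0 ∧ ψ = fun x : ℝ => x ^ p) ∨
    (ψ = fun x : ℝ => -Real.log x)

open Metric Filter Topology in
/-- Comparison of integrals of continuous functions against two finite measures on a compact metric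
space for which the measure of a ball depends only on its radius. -/
theorem lintegral_mul_univ_le_of_uniform_balls {X : Type*} [MetricSpace X] [CompactSpace X]
    [MeasurableSpace X] [BorelSpace X] (μ ν : Measure X) [IsFiniteMeasure μ] [IsFiniteMeasure ν]
    (hμ : ∀ x y r, μ (ball x r) = μ (ball y r)) (hν : ∀ x y r, ν (ball x r) = ν (ball y r))
    (f : BoundedContinuousFunction X NNReal) :
    ν univ * ∫⁻ x, f x ∂μ ≤ μ univ * ∫⁻ x, f x ∂ν := by
  rcases eq_or_ne ν 0 with rfl | hν0
  · simp
  have : Nonempty X := by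
    by_contra h
    have := not_nonempty_iff.mp h
    exact hν0 (Measure.eq_zero_of_isEmpty ν)
  obtain ⟨x₀⟩ : Nonempty X := inferInstance
  have hpos : ∀ r : ℝ, 0 < r → ν (ball x₀ r) ≠ 0 := by
    intro r hr h0
    obtain ⟨t, ht⟩ := isCompact_univ.elim_finite_subcover (fun x : X => ball x r)
      (fun x => isOpen_ball) (fun x _ => mem_iUnion.2 ⟨x, mem_ball_self hr⟩)
    apply hν0
    rw [← Measure.measure_univ_eq_zero]
    refine measure_mono_null ht ?_
    refine (measure_biUnion_null_iff t.countable_toSet).2 fun x _ => ?_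
    rw [hν x x₀, h0]
  have swap : ∀ (r : ℝ) (F : X → ENNReal), Measurable F →
      ∫⁻ x, ∫⁻ y in ball x r, F y ∂ν ∂μ = μ (ball x₀ r) * ∫⁻ y, F y ∂ν := by
    intro r F hF
    have hm : MeasurableSet {z : X × X | dist z.2 z.1 < r} :=
      (isOpen_lt (by fun_prop) continuous_const).measurableSet
    have h1 : ∀ x, ∫⁻ y in ball x r, F y ∂ν =
        ∫⁻ y, {z : X × X | dist z.2 z.1 < r}.indicator (fun z => F z.2) (x, y) ∂ν := by
      intro x
      rw [← lintegral_indicator measurableSet_ball]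
      rfl
    simp_rw [h1]
    rw [lintegral_lintegral_swap]
    · have h2 : ∀ y, ∫⁻ x, {z : X × X | dist z.2 z.1 < r}.indicator (fun z => F z.2) (x, y) ∂μ
          = μ (ball x₀ r) * F y := by
        intro y
        have : (fun x => {z : X × X | dist z.2 z.1 < r}.indicator (fun z => F z.2) (x, y))
            = (ball y r).indicator (fun _ => F y) := by
          ext x
          simp only [indicator, mem_ofPred_eq, mem_ball, dist_comm]
        rw [this, lintegral_indicator measurableSet_ball, setLIntegral_const, hμ y x₀, mul_comm]
      simp_rw [h2]
      rw [lintegral_const_mul _ hF]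
    · exact ((hF.comp measurable_snd).indicator hm).aemeasurable
  have hunif : ∀ r : ℝ, 0 < r →
      ν (ball x₀ r) * μ univ = μ (ball x₀ r) * ν univ := by
    intro r hr
    have := swap r (fun _ => 1) measurable_const
    simp only [lintegral_one, Measure.restrict_apply MeasurableSet.univ, univ_inter] at this
    rw [← this]
    simp_rw [fun x => hν x x₀ r]
    rw [lintegral_const]
  have key : ∀ ε : NNReal, 0 < ε →
      ν univ * ∫⁻ x, f x ∂μ ≤ μ univ * ∫⁻ x, f x ∂ν + ε * (μ univ * ν univ) := by
    intro ε hε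
    have huc : UniformContinuous f := CompactSpace.uniformContinuous_of_continuous f.continuous
    obtain ⟨r, hr, hrf⟩ := Metric.uniformContinuous_iff.1 huc ε (by exact_mod_cast hε)
    have hfm : Measurable (fun x => (f x : ENNReal)) := by
      have := f.continuous.measurable
      fun_prop
    set h := ν (ball x₀ r)
    set g := μ (ball x₀ r)
    have e1 : ∀ x, h * f x ≤ ∫⁻ y in ball x r, ((f y : ENNReal) + ε) ∂ν := by
      intro x
      calc h * f x = ∫⁻ y in ball x r, (f x : ENNReal) ∂ν := by
            rw [setLIntegral_const, mul_comm, hν x x₀]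
        _ ≤ _ := by
            refine setLIntegral_mono' measurableSet_ball ?_
            intro y hy
            have h3 : dist (f y) (f x) < ε := hrf (mem_ball.1 hy)
            rw [NNReal.dist_eq, abs_lt] at h3
            have h4 : f x ≤ f y + ε := by
              rw [← NNReal.coe_le_coe]
              push_cast
              linarith [h3.1]
            exact_mod_cast h4
    have e2 : h * ∫⁻ x, f x ∂μ ≤ g * ∫⁻ y, f y ∂ν + g * (ε * ν univ) := by
      rw [← lintegral_const_mul _ hfm]
      refine (lintegral_mono e1).trans ?_
      rw [swap r _ (hfm.add_const _), lintegral_add_right _ measurable_const, lintegral_const,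
        mul_add]
    have h0 : h ≠ 0 := hpos r hr
    have hT : h ≠ ⊤ := measure_ne_top _ _
    have e3 : h * (ν univ * ∫⁻ x, f x ∂μ) ≤
        h * (μ univ * ∫⁻ x, f x ∂ν + ε * (μ univ * ν univ)) := by
      calc h * (ν univ * ∫⁻ x, f x ∂μ) = ν univ * (h * ∫⁻ x, f x ∂μ) := by ring
        _ ≤ ν univ * (g * ∫⁻ y, f y ∂ν + g * (ε * ν univ)) := by gcongr
        _ = (g * ν univ) * (∫⁻ y, f y ∂ν + ε * ν univ) := by ring
        _ = (h * μ univ) * (∫⁻ y, f y ∂ν + ε * ν univ) := by rw [hunif r hr]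
        _ = _ := by ring
    exact (ENNReal.mul_le_mul_iff_right h0 hT).1 e3
  refine ENNReal.le_of_forall_pos_le_add ?_
  intro δ hδ _
  set c := (μ univ * ν univ).toNNReal with hc
  have hc' : (c : ENNReal) = μ univ * ν univ :=
    ENNReal.coe_toNNReal (ENNReal.mul_ne_top (measure_ne_top _ _) (measure_ne_top _ _))
  refine (key (δ / (c + 1)) (by positivity)).trans ?_
  gcongr
  rw [← hc']
  norm_cast
  rw [div_mul_eq_mul_div]
  refine div_le_of_le_mul₀ (by positivity) (by positivity) ?_
  gcongr
  simp

open Metric in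
/-- Two finite measures on a compact metric space for which the measure of a ball depends only on
its radius are proportional. -/
theorem smul_eq_smul_of_uniform_balls {X : Type*} [MetricSpace X] [CompactSpace X]
    [MeasurableSpace X] [BorelSpace X] (μ ν : Measure X) [IsFiniteMeasure μ] [IsFiniteMeasure ν]
    (hμ : ∀ x y r, μ (ball x r) = μ (ball y r)) (hν : ∀ x y r, ν (ball x r) = ν (ball y r)) :
    ν univ • μ = μ univ • ν := by
  have : IsFiniteMeasure (ν univ • μ) := Measure.smul_finite μ (measure_ne_top _ _)
  refine ext_of_forall_lintegral_eq_of_IsFiniteMeasure fun f => ?_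
  rw [lintegral_smul_measure, lintegral_smul_measure, smul_eq_mul, smul_eq_mul]
  exact le_antisymm (lintegral_mul_univ_le_of_uniform_balls μ ν hμ hν f)
    (lintegral_mul_univ_le_of_uniform_balls ν μ hν hμ f)

open Metric in
/-- A measure with uniform balls, one of which is finite, on a compact space is finite. -/
theorem isFiniteMeasure_of_uniform_balls {X : Type*} [MetricSpace X] [CompactSpace X]
    [MeasurableSpace X] (μ : Measure X)
    (hμ : ∀ x y r, μ (ball x r) = μ (ball y r)) (x₀ : X) (r : ℝ) (hr : 0 < r)
    (h : μ (ball x₀ r) ≠ ⊤) : IsFiniteMeasure μ := by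
  obtain ⟨t, ht⟩ := isCompact_univ.elim_finite_subcover (fun x : X => ball x r)
    (fun x => isOpen_ball) (fun x _ => mem_iUnion.2 ⟨x, mem_ball_self hr⟩)
  refine ⟨(measure_mono ht).trans_lt ((measure_biUnion_finset_le t _).trans_lt ?_)⟩
  refine ENNReal.sum_lt_top.2 fun x _ => ?_
  rw [hμ x x₀]
  exact h.lt_top

open Metric in
/-- Hausdorff measure of balls on the unit sphere depends only on the radius. -/
theorem hausdorffMeasure_sphere_ball_eq (n : ℕ) (d : ℝ) (x y : sphere (0 : V n) 1) (r : ℝ) :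
    μH[d] (ball x r) = μH[d] (ball y r) := by
  let L : V n ≃ₗᵢ[ℝ] V n := Submodule.reflection (ℝ ∙ ((x : V n) - y))ᗮ
  have hL : L x = y := Submodule.reflection_sub (by simp)
  let e : sphere (0 : V n) 1 ≃ᵢ sphere (0 : V n) 1 :=
    { toEquiv := L.toEquiv.subtypeEquiv (by intro a; simp)
      isometry_toFun := fun a b => L.isometry a b }
  have he : e x = y := Subtype.ext hL
  rw [← e.hausdorffMeasure_image d (ball x r), IsometryEquiv.image_ball, he]

open Metric Pointwise in
/-- `toSphere` measure of balls on the unit sphere depends only on the radius. -/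
theorem toSphere_ball_eq (n : ℕ) (x y : sphere (0 : V n) 1) (r : ℝ) :
    (volume : Measure (V n)).toSphere (ball x r) =
      (volume : Measure (V n)).toSphere (ball y r) := by
  let L : V n ≃ₗᵢ[ℝ] V n := Submodule.reflection (ℝ ∙ ((x : V n) - y))ᗮ
  have hL : L x = y := Submodule.reflection_sub (by simp)
  rw [Measure.toSphere_apply' _ measurableSet_ball, Measure.toSphere_apply' _ measurableSet_ball]
  congr 1
  have hset : (Ioo (0 : ℝ) 1 • ((↑) '' (ball x r) : Set (V n)))
      = L ⁻¹' (Ioo (0 : ℝ) 1 • ((↑) '' (ball y r) : Set (V n))) := by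
    ext z
    simp only [mem_smul, mem_image, mem_preimage, mem_ball, Subtype.exists, exists_and_right,
      exists_eq_right]
    constructor
    · rintro ⟨a, ha, b, ⟨hb, hbx⟩, rfl⟩
      refine ⟨a, ha, L b, ⟨by simpa using hb, ?_⟩, by simp⟩
      rw [Subtype.dist_eq] at hbx ⊢
      simpa [← hL] using hbx
    · rintro ⟨a, ha, b, ⟨hb, hbx⟩, hab⟩
      refine ⟨a, ha, L.symm b, ⟨by simpa using hb, ?_⟩, ?_⟩
      · rw [Subtype.dist_eq] at hbx ⊢
        rw [← hL] at hbx
        rw [← L.dist_map]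
        simpa using hbx
      · apply L.injective
        simp [hab]
  rw [hset]
  exact (L.measurePreserving.measure_preimage_equiv (f := L.toHomeomorph.toMeasurableEquiv) _)

open Metric in
theorem hausdorffMeasure_halfCap_ne_top (n : ℕ) :
    μH[(n : ℝ)] {u : V n | ‖u‖ = 1 ∧ 1 / 2 ≤ u (Fin.last n)} ≠ ⊤ := by
  let F : (Fin n → ℝ) → V n := fun y => WithLp.toLp 2 (Fin.snoc y 1 : Fin (n + 1) → ℝ)
  have hF0 : ∀ y, F y ≠ 0 := by
    intro y h
    have : F y (Fin.last n) = 0 := by rw [h]; rfl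
    simp [F] at this
  have hF : ContDiff ℝ 1 F := by
    rw [contDiff_euclidean]
    intro i
    refine Fin.lastCases ?_ (fun j => ?_) i
    · simp only [F, Fin.snoc_last]; exact contDiff_const
    · simp only [F, Fin.snoc_castSucc]; exact contDiff_apply ℝ ℝ j
  let f : (Fin n → ℝ) → V n := fun y => (‖F y‖)⁻¹ • F y
  have hf : ContDiff ℝ 1 f :=
    ((hF.norm ℝ hF0).inv (fun y => norm_ne_zero_iff.2 (hF0 y))).smul hF
  obtain ⟨K, hK⟩ := hf.contDiffOn.exists_lipschitzOnWith one_ne_zero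
    (convex_closedBall (0 : Fin n → ℝ) 2) (isCompact_closedBall _ _)
  have hsub : {u : V n | ‖u‖ = 1 ∧ 1 / 2 ≤ u (Fin.last n)} ⊆ f '' closedBall 0 2 := by
    rintro u ⟨hu, hl⟩
    have hpos : 0 < u (Fin.last n) := by linarith
    refine ⟨fun i => u i.castSucc / u (Fin.last n), ?_, ?_⟩
    · rw [mem_closedBall_zero_iff, pi_norm_le_iff_of_nonneg (by norm_num)]
      intro i
      rw [norm_div, Real.norm_of_nonneg hpos.le, div_le_iff₀ hpos]
      have := PiLp.norm_apply_le u i.castSucc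
      linarith
    · have h1 : F (fun i => u i.castSucc / u (Fin.last n)) = (u (Fin.last n))⁻¹ • u := by
        ext i
        refine Fin.lastCases ?_ (fun j => ?_) i
        · simp [F, hpos.ne']
        · simp [F, div_eq_inv_mul]
      simp only [f, h1, norm_smul, hu, mul_one, smul_smul, norm_inv, Real.norm_of_nonneg hpos.le,
        inv_inv]
      rw [mul_inv_cancel₀ hpos.ne', one_smul]
  refine ne_top_of_le_ne_top ?_ (measure_mono hsub)
  refine ne_top_of_le_ne_top ?_ (hK.hausdorffMeasure_image_le (Nat.cast_nonneg n))
  refine ENNReal.mul_ne_top (by simp) ?_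
  have : (μH[(n : ℝ)] : Measure (Fin n → ℝ)) = volume := by
    have := hausdorffMeasure_pi_real (ι := Fin n)
    simpa using this
  rw [this]
  exact (isCompact_closedBall _ _).measure_lt_top.ne

open Metric in
theorem isFiniteMeasure_hausdorffMeasure_sphere (n : ℕ) :
    IsFiniteMeasure (μH[(n : ℝ)] : Measure (sphere (0 : V n) 1)) := by
  refine isFiniteMeasure_of_uniform_balls _ (hausdorffMeasure_sphere_ball_eq n n)
    ⟨Etop n, by simp [Etop]⟩ (1 / 2) (by norm_num) ?_
  rw [← (isometry_subtype_coe (s := sphere (0 : V n) 1)).hausdorffMeasure_image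
    (Or.inl (Nat.cast_nonneg n))]
  refine ne_top_of_le_ne_top (hausdorffMeasure_halfCap_ne_top n) (measure_mono ?_)
  rintro _ ⟨u, hu, rfl⟩
  refine ⟨by simp, ?_⟩
  rw [mem_ball, Subtype.dist_eq, dist_eq_norm] at hu
  have h1 := (PiLp.norm_apply_le ((u : V n) - Etop n) (Fin.last n)).trans_lt hu
  rw [Real.norm_eq_abs, abs_lt] at h1
  have h2 : ((u : V n) - Etop n) (Fin.last n) = (u : V n) (Fin.last n) - 1 := by simp [Etop]
  rw [h2] at h1
  linarith [h1.1]

open Metric in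
/-- An integral over the capillary cap vanishes if the corresponding integral against
`volume.toSphere` does. -/
theorem integral_capCap_eq_zero (n : ℕ) (θ : ℝ) (f : V n → ℝ)
    (h : ∫ u in {u : sphere (0 : V n) 1 | Real.cos θ ≤ (u : V n) (Fin.last n)}, f u
      ∂(volume : Measure (V n)).toSphere = 0) :
    ∫ ζ in capCap n θ, f (ζ + Real.cos θ • Etop n) ∂μH[(n : ℝ)] = 0 := by
  have := isFiniteMeasure_hausdorffMeasure_sphere n
  let e : V n ≃ᵢ V n := IsometryEquiv.addRight (Real.cos θ • Etop n)
  have hpre : capCap n θ = e ⁻¹' (sphCap n θ) := by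
    ext ζ
    simp only [capCap, sphCap, e, mem_ofPred_eq, mem_preimage, IsometryEquiv.addRight_apply]
    have : (ζ + Real.cos θ • Etop n) (Fin.last n) = ζ (Fin.last n) + Real.cos θ := by simp [Etop]
    rw [this]
    constructor
    · rintro ⟨h1, h2⟩; exact ⟨h2, by linarith⟩
    · rintro ⟨h1, h2⟩; exact ⟨by linarith, h1⟩
  have step1 : ∫ ζ in capCap n θ, f (ζ + Real.cos θ • Etop n) ∂μH[(n : ℝ)] =
      ∫ u in sphCap n θ, f u ∂μH[(n : ℝ)] := by
    rw [hpre]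
    exact (e.measurePreserving_hausdorffMeasure n).setIntegral_preimage_emb
      e.toHomeomorph.measurableEmbedding f _
  rw [step1]
  set A : Set (sphere (0 : V n) 1) := {u | Real.cos θ ≤ (u : V n) (Fin.last n)} with hA
  have himg : sphCap n θ = (↑) '' A := by
    ext u
    simp only [sphCap, hA, mem_ofPred_eq, mem_image, Subtype.exists, exists_and_right,
      exists_eq_right, mem_sphere_zero_iff_norm, exists_prop]
  have hemb : MeasurableEmbedding ((↑) : sphere (0 : V n) 1 → V n) :=
    MeasurableEmbedding.subtype_coe isClosed_sphere.measurableSet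
  have hrestr : (μH[(n : ℝ)] : Measure (V n)).restrict (sphCap n θ) =
      ((μH[(n : ℝ)] : Measure (sphere (0 : V n) 1)).restrict A).map (↑) := by
    rw [← hemb.injective.preimage_image A, ← hemb.restrict_map, 
      (isometry_subtype_coe (s := sphere (0 : V n) 1)).map_hausdorffMeasure
        (Or.inl (Nat.cast_nonneg n)), Measure.restrict_restrict_of_subset (image_subset_range _ _),
      himg]
  rw [hrestr, hemb.integral_map]
  have hsm := smul_eq_smul_of_uniform_balls (μH[(n : ℝ)] : Measure (sphere (0 : V n) 1))
    (volume : Measure (V n)).toSphere (hausdorffMeasure_sphere_ball_eq n n) (toSphere_ball_eq n)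
  have hne : (volume : Measure (V n)).toSphere univ ≠ 0 := by
    rw [Ne, Measure.measure_univ_eq_zero]
    exact Measure.toSphere_ne_zero _
  have hfin : (volume : Measure (V n)).toSphere univ ≠ ⊤ := measure_ne_top _ _
  have h3 := congrArg (fun m : Measure (sphere (0 : V n) 1) => ∫ u in A, f u ∂m) hsm
  simp only [Measure.restrict_smul, integral_smul_measure, h, smul_zero] at h3
  rcases smul_eq_zero.1 h3 with h4 | h4
  · exact absurd h4 (ENNReal.toReal_ne_zero.2 ⟨hne, hfin⟩)
  · exact h4

/-- The Jacobian matrix of a tuple of functions in the standard coordinates. -/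
def jacMat (n : ℕ) (Φ : Fin (n + 1) → V n → ℝ) (x : V n) :
    Matrix (Fin (n + 1)) (Fin (n + 1)) ℝ :=
  Matrix.of fun b c => fderiv ℝ (Φ b) x (EuclideanSpace.single c 1)

theorem contDiff_det {E : Type*} [NormedAddCommGroup E] [NormedSpace ℝ E] {ι : Type*} [Fintype ι]
    [DecidableEq ι] {m : WithTop ℕ∞} {A : E → Matrix ι ι ℝ}
    (h : ∀ i j, ContDiff ℝ m fun x => A x i j) : ContDiff ℝ m fun x => (A x).det := by
  simp only [Matrix.det_apply]
  exact ContDiff.sum fun σ _ => (contDiff_prod fun i _ => h _ _).const_smul _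

theorem contDiff_adjugate {E : Type*} [NormedAddCommGroup E] [NormedSpace ℝ E] {ι : Type*}
    [Fintype ι] [DecidableEq ι] {m : WithTop ℕ∞} {A : E → Matrix ι ι ℝ}
    (h : ∀ i j, ContDiff ℝ m fun x => A x i j) (i j : ι) :
    ContDiff ℝ m fun x => (A x).adjugate i j := by
  simp only [Matrix.adjugate_apply]
  refine contDiff_det fun a b => ?_
  simp only [Matrix.updateRow_apply]
  split_ifs
  · exact contDiff_const
  · exact h a b

theorem contDiff_jacMat (n : ℕ) {Φ : Fin (n + 1) → V n → ℝ} {m m' : WithTop ℕ∞} (hm : m + 1 ≤ m')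
    (hΦ : ∀ b, ContDiff ℝ m' (Φ b)) (b c : Fin (n + 1)) :
    ContDiff ℝ m fun x => jacMat n Φ x b c := by
  simp only [jacMat, Matrix.of_apply]
  exact ((hΦ b).fderiv_right hm).clm_apply contDiff_const

/-- The determinant as a continuous multilinear function of the rows. -/
def detRowCont (ι : Type*) [Fintype ι] [DecidableEq ι] :
    ContinuousMultilinearMap ℝ (fun _ : ι => ι → ℝ) ℝ :=
  { (Matrix.detRowAlternating (n := ι) (R := ℝ)).toMultilinearMap with
    cont := by
      change Continuous fun M : Matrix ι ι ℝ => M.det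
      exact continuous_id.matrix_det }

/-- **Piola identity**: rows of the cofactor matrix of a Jacobian are divergence free. -/
theorem sum_fderiv_adjugate_jacMat_eq_zero (n : ℕ) {Φ : Fin (n + 1) → V n → ℝ}
    (hΦ : ∀ b, ContDiff ℝ 2 (Φ b)) (l : Fin (n + 1)) (x : V n) :
    ∑ a, fderiv ℝ (fun y => (jacMat n Φ y).adjugate a l) x (EuclideanSpace.single a 1) = 0 := by
  let R : V n → Fin (n + 1) → Fin (n + 1) → ℝ := fun y => jacMat n Φ y
  set S : Fin (n + 1) → Fin (n + 1) → Fin (n + 1) → ℝ := fun b a c =>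
    fderiv ℝ (fderiv ℝ (Φ b)) x (EuclideanSpace.single a 1) (EuclideanSpace.single c 1) with hS
  have hSsymm : ∀ b a c, S b a c = S b c a := fun b a c =>
    ((hΦ b).contDiffAt.isSymmSndFDerivAt (by simp)) _ _
  set T : Fin (n + 1) → Fin (n + 1) → Fin (n + 1) → ℝ := fun b a c =>
    Matrix.detRowAlternating (Function.update (Function.update (R x) l (Pi.single a 1)) b
      (Pi.single c 1)) with hT
  have hTanti : ∀ b, b ≠ l → ∀ a c, T b c a = - T b a c := by
    intro b hb a c
    simp only [hT]
    rw [← AlternatingMap.map_swap _ _ hb]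
    congr 1
    ext i j
    simp only [Function.comp_apply, Function.update_apply, Equiv.swap_apply_def]
    split_ifs <;> simp_all
  have hder : ∀ a, fderiv ℝ (fun y => (jacMat n Φ y).adjugate a l) x (EuclideanSpace.single a 1)
      = ∑ b, ∑ c, if b = l then 0 else S b a c * T b a c := by
    intro a
    let g : Fin (n + 1) → V n → (Fin (n + 1) → ℝ) := fun b y =>
      Function.update (R y) l (Pi.single a 1) b
    let g' : Fin (n + 1) → (V n →L[ℝ] (Fin (n + 1) → ℝ)) := fun b =>
      if b = l then 0 else ContinuousLinearMap.pi fun c =>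
        (ContinuousLinearMap.apply ℝ ℝ (EuclideanSpace.single c (1 : ℝ) : V n)).comp
          (fderiv ℝ (fderiv ℝ (Φ b)) x)
    have hg : ∀ b, HasFDerivAt (g b) (g' b) x := by
      intro b
      by_cases hb : b = l
      · subst hb
        simp only [g, g', Function.update_self, if_true]
        exact hasFDerivAt_const _ _
      · simp only [g, g', Function.update_of_ne hb, if_neg hb]
        rw [hasFDerivAt_pi]
        intro c
        have h1 : HasFDerivAt (fderiv ℝ (Φ b)) (fderiv ℝ (fderiv ℝ (Φ b)) x) x :=
          (((hΦ b).fderiv_right (m := 1) le_rfl).differentiable one_ne_zero x).hasFDerivAt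
        exact (ContinuousLinearMap.apply ℝ ℝ
          (EuclideanSpace.single c (1 : ℝ) : V n)).hasFDerivAt.comp x h1
    have h2 := HasFDerivAt.multilinear_comp (f := detRowCont (Fin (n + 1))) hg
    have h3 : (fun y => (jacMat n Φ y).adjugate a l) =
        fun y => detRowCont (Fin (n + 1)) fun b => g b y := by
      ext y
      rw [Matrix.adjugate_apply]
      rfl
    rw [h3, h2.fderiv, _root_.sum_apply]
    refine Finset.sum_congr rfl fun b _ => ?_
    have h4 : ((detRowCont (Fin (n + 1))).toContinuousLinearMap (fun j => g j x) b ∘L g' b)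
        (EuclideanSpace.single a 1) = Matrix.detRowAlternating
        (Function.update (Function.update (R x) l (Pi.single a 1)) b
          (g' b (EuclideanSpace.single a 1))) := rfl
    rw [h4]
    by_cases hb : b = l
    · simp only [g', if_pos hb, Finset.sum_const_zero, _root_.zero_apply]
      exact AlternatingMap.map_coord_zero _ b (by simp)
    · have h5 : g' b (EuclideanSpace.single a 1) = ∑ c, S b a c • Pi.single c (1 : ℝ) := by
        ext c
        simp [g', hb, hS, Finset.sum_apply, Pi.single_apply]
      rw [h5, AlternatingMap.map_update_sum]
      refine Finset.sum_congr rfl fun c _ => ?_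
      rw [AlternatingMap.map_update_smul, if_neg hb, smul_eq_mul]
  simp_rw [hder]
  rw [Finset.sum_comm]
  refine Finset.sum_eq_zero fun b _ => ?_
  by_cases hb : b = l
  · simp [hb]
  · simp only [if_neg hb]
    have h6 : ∑ a, ∑ c, S b a c * T b a c = - ∑ a, ∑ c, S b a c * T b a c := by
      conv_lhs => rw [Finset.sum_comm]
      rw [← Finset.sum_neg_distrib]
      refine Finset.sum_congr rfl fun a _ => ?_
      rw [← Finset.sum_neg_distrib]
      refine Finset.sum_congr rfl fun c _ => ?_
      rw [hSsymm b c a, hTanti b hb a c, mul_neg]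
    linarith

/-- The Jacobian determinant is a null Lagrangian. -/
theorem integral_det_jacMat_eq_zero (n : ℕ) {Φ : Fin (n + 1) → V n → ℝ}
    (hΦ : ∀ b, ContDiff ℝ 2 (Φ b)) (l : Fin (n + 1)) (hl : HasCompactSupport (Φ l)) :
    ∫ x, (jacMat n Φ x).det = 0 := by
  have hC : ∀ a, ContDiff ℝ 1 fun x => (jacMat n Φ x).adjugate a l := fun a =>
    contDiff_adjugate (contDiff_jacMat n (by norm_num) hΦ) a l
  have hCc : ∀ a, Continuous fun x =>
      fderiv ℝ (fun y => (jacMat n Φ y).adjugate a l) x (EuclideanSpace.single a 1) := fun a =>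
    ((hC a).continuous_fderiv one_ne_zero).clm_apply continuous_const
  have hlc : ∀ a : Fin (n + 1), Continuous fun x =>
      fderiv ℝ (Φ l) x (EuclideanSpace.single a 1) := fun a =>
    ((hΦ l).continuous_fderiv two_ne_zero).clm_apply continuous_const
  have hls : ∀ a : Fin (n + 1), HasCompactSupport fun x =>
      fderiv ℝ (Φ l) x (EuclideanSpace.single a 1) := fun a => hl.fderiv_apply ℝ _
  have hI1 : ∀ a : Fin (n + 1), Integrable fun x => (jacMat n Φ x).adjugate a l *
      fderiv ℝ (Φ l) x (EuclideanSpace.single a 1) := fun a =>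
    ((hC a).continuous.mul (hlc a)).integrable_of_hasCompactSupport (hls a).mul_left
  have hI2 : ∀ a : Fin (n + 1), Integrable fun x =>
      fderiv ℝ (fun y => (jacMat n Φ y).adjugate a l) x (EuclideanSpace.single a 1) * Φ l x :=
    fun a => ((hCc a).mul (hΦ l).continuous).integrable_of_hasCompactSupport hl.mul_left
  have hI3 : ∀ a : Fin (n + 1), Integrable fun x => (jacMat n Φ x).adjugate a l * Φ l x :=
    fun a => ((hC a).continuous.mul (hΦ l).continuous).integrable_of_hasCompactSupport hl.mul_left
  have h1 : ∀ x, (jacMat n Φ x).det = ∑ a, (jacMat n Φ x).adjugate a l *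
      fderiv ℝ (Φ l) x (EuclideanSpace.single a 1) := by
    intro x
    rw [Matrix.det_eq_sum_mul_adjugate_row _ l]
    exact Finset.sum_congr rfl fun a _ => mul_comm _ _
  simp_rw [h1]
  rw [integral_finsetSum _ fun a _ => hI1 a]
  have h2 : ∀ a : Fin (n + 1), ∫ x, (jacMat n Φ x).adjugate a l *
      fderiv ℝ (Φ l) x (EuclideanSpace.single a 1) =
      - ∫ x, fderiv ℝ (fun y => (jacMat n Φ y).adjugate a l) x (EuclideanSpace.single a 1) *
        Φ l x := fun a =>
    integral_mul_fderiv_eq_neg_fderiv_mul_of_integrable (hI2 a) (hI1 a) (hI3 a)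
      (fun x _ => (hC a).differentiable one_ne_zero x)
      (fun x _ => (hΦ l).differentiable two_ne_zero x)
  simp_rw [h2]
  rw [Finset.sum_neg_distrib, ← integral_finsetSum _ fun a _ => hI2 a]
  simp_rw [← Finset.sum_mul, sum_fderiv_adjugate_jacMat_eq_zero n hΦ l]
  simp

open Matrix in
theorem adjugate_one_sub_vecMulVec_self {ι : Type*} [Fintype ι] [DecidableEq ι] (u : ι → ℝ)
    (hu : u ⬝ᵥ u = 1) : (1 - vecMulVec u u).adjugate = vecMulVec u u := by
  have hPP : vecMulVec u u * vecMulVec u u = vecMulVec u u := by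
    rw [vecMulVec_mul_vecMulVec, hu, one_smul]
  have hdet : ∀ s : ℝ, (1 - s • vecMulVec u u).det = 1 - s := by
    intro s
    have h := det_one_add_replicateCol_mul_replicateRow (ι := Unit) (-s • u) u
    rw [← vecMulVec_eq, smul_vecMulVec, neg_smul, ← sub_eq_add_neg] at h
    rw [h, dotProduct_smul, hu]
    simp [sub_eq_add_neg]
  have key : ∀ s : ℝ, s ≠ 1 →
      (1 - s • vecMulVec u u).adjugate = (1 - s) • (1 : Matrix ι ι ℝ) + s • vecMulVec u u := by
    intro s hs
    have h0 : (1 - s : ℝ) ≠ 0 := sub_ne_zero.2 hs.symm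
    have hXY : (1 - s • vecMulVec u u) * ((1 - s) • (1 : Matrix ι ι ℝ) + s • vecMulVec u u)
        = (1 - s) • 1 := by
      simp only [sub_mul, mul_add, one_mul, smul_mul_smul_comm, hPP, mul_one]
      module
    have h1 := congrArg (fun Z => (1 - s • vecMulVec u u).adjugate * Z) hXY
    simp only [← mul_assoc, adjugate_mul, hdet, smul_mul_assoc, mul_smul_comm, one_mul,
      mul_one] at h1
    exact (smul_right_injective _ h0 h1).symm
  have hc1 : Continuous fun s : ℝ => (1 - s • vecMulVec u u).adjugate := by
    apply Continuous.matrix_adjugate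
    fun_prop
  have hc2 : Continuous fun s : ℝ => (1 - s) • (1 : Matrix ι ι ℝ) + s • vecMulVec u u := by
    fun_prop
  have := congrFun (Continuous.ext_on (dense_compl_singleton (1 : ℝ)) hc1 hc2 key) 1
  simpa using this

open Matrix in
theorem adjugate_add_smul_one_sub_vecMulVec {ι : Type*} [Fintype ι] [DecidableEq ι]
    (M : Matrix ι ι ℝ) (hM : Mᵀ = M) (u : ι → ℝ) (hu : u ⬝ᵥ u = 1) (hMu : M *ᵥ u = 0)
    (t : ℝ) (ht : t ≠ 0) :
    (M + t • (1 - vecMulVec u u)).adjugate = ((M + t • 1).det / t) • vecMulVec u u := by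
  set A : Matrix ι ι ℝ := M + t • 1 with hA
  have hAu : A *ᵥ u = t • u := by
    rw [hA, add_mulVec, hMu, smul_mulVec, one_mulVec, zero_add]
  have hAt : Aᵀ = A := by
    rw [hA, transpose_add, hM, transpose_smul, transpose_one]
  have huA : u ᵥ* A = t • u := by
    rw [← hAu, ← vecMul_transpose, hAt]
  have h1 : M + t • (1 - vecMulVec u u) = A * (1 - vecMulVec u u) := by
    rw [mul_sub, mul_vecMulVec, hAu, mul_one, smul_vecMulVec, smul_sub, hA]
    abel
  rw [h1, adjugate_mul_distrib, adjugate_one_sub_vecMulVec_self u hu]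
  have h2 : t • (vecMulVec u u * A.adjugate) = A.det • vecMulVec u u := by
    have : t • vecMulVec u u = vecMulVec u u * A := by
      rw [vecMulVec_mul, huA]
      ext i j
      simp only [Matrix.smul_apply, vecMulVec_apply, Pi.smul_apply, smul_eq_mul]
      ring
    rw [← smul_mul_assoc, this, mul_assoc, mul_adjugate, mul_smul_comm, mul_one]
  rw [div_eq_inv_mul, mul_smul, ← h2, smul_smul, inv_mul_cancel₀ ht, one_smul]

open Matrix in
theorem det_add_smul_one_eq_sum (n : ℕ) (M : Matrix (Fin (n + 1)) (Fin (n + 1)) ℝ)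
    (hM : M.det = 0) (t : ℝ) (ht : t ≠ 0) :
    (M + t • 1).det / t =
      ∑ j ∈ Finset.range (n + 1), (-1 : ℝ) ^ j * M.charpoly.coeff (n + 1 - j) * t ^ (n - j) := by
  have h1 : M.charpoly.eval (-t) = (-1) ^ (n + 1) * (M + t • 1).det := by
    rw [eval_charpoly]
    have : scalar (Fin (n + 1)) (-t) - M = - (M + t • 1) := by
      rw [scalar_apply, ← smul_one_eq_diagonal]
      module
    rw [this, det_neg, Fintype.card_fin]
  have h0 : M.charpoly.coeff 0 = 0 := by
    have := M.det_eq_sign_charpoly_coeff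
    rw [hM] at this
    simpa using this.symm
  rw [Polynomial.eval_eq_sum_range, charpoly_natDegree_eq_dim, Fintype.card_fin,
    Finset.sum_range_succ', h0, zero_mul, add_zero] at h1
  have h2 : (M + t • 1).det = (-1) ^ (n + 1) *
      ∑ m ∈ Finset.range (n + 1), M.charpoly.coeff (m + 1) * (-t) ^ (m + 1) := by
    rw [h1, ← mul_assoc, ← mul_pow]
    simp
  rw [h2, ← Finset.sum_range_reflect, Finset.mul_sum, Finset.sum_div]
  refine Finset.sum_congr rfl fun j hj => ?_
  have hj' : j ≤ n := Nat.lt_succ_iff.1 (Finset.mem_range.1 hj)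
  have e1 : n + 1 - 1 - j + 1 = n + 1 - j := by omega
  have e2 : n + 1 - j = (n - j) + 1 := by omega
  have e3 : ((-1 : ℝ)) ^ (n + 1) = (-1) ^ j * (-1) ^ (n + 1 - j) := by
    rw [← pow_add]; congr 1; omega
  have e4 : ((-1 : ℝ)) ^ (n + 1 - j) * (-1) ^ (n + 1 - j) = 1 := by
    rw [← mul_pow]; simp
  rw [e1, neg_pow t, e3]
  have e5 : t ^ (n + 1 - j) = t ^ (n - j) * t := by rw [e2, pow_succ]
  rw [e5]
  field_simp
  linear_combination (M.charpoly.coeff (n + 1 - j)) * e4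

theorem continuous_hessM (n : ℕ) {Q : V n → ℝ} (hQ : ContDiff ℝ 3 Q) (a b : Fin (n + 1)) :
    Continuous fun x => hessM n Q x a b := by
  have h1 : ContDiff ℝ 2 (fderiv ℝ Q) := hQ.fderiv_right (by norm_num)
  exact ((h1.continuous_fderiv two_ne_zero).clm_apply continuous_const).clm_apply continuous_const

theorem continuous_coord (n : ℕ) (i : Fin (n + 1)) : Continuous fun x : V n => x i :=
  (EuclideanSpace.proj (𝕜 := ℝ) i).continuous

theorem isCompact_truncatedCone (n : ℕ) {c : ℝ} (hc : 0 < c) (a b : ℝ) :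
    IsCompact {x : V n | a ≤ x (Fin.last n) ∧ x (Fin.last n) ≤ b ∧
      c * ‖x‖ ≤ x (Fin.last n)} := by
  have hcl : IsClosed {x : V n | a ≤ x (Fin.last n) ∧ x (Fin.last n) ≤ b ∧
      c * ‖x‖ ≤ x (Fin.last n)} :=
    (isClosed_le continuous_const (continuous_coord n _)).inter
      ((isClosed_le (continuous_coord n _) continuous_const).inter
        (isClosed_le (by fun_prop) (continuous_coord n _)))
  refine Metric.isCompact_of_isClosed_isBounded hcl
    ((Metric.isBounded_closedBall (x := (0 : V n)) (r := b / c)).subset ?_)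
  rintro x ⟨-, h2, h3⟩
  rw [mem_closedBall_zero_iff, le_div_iff₀ hc]
  linarith

/-- A Lipschitz function that vanishes on the lateral boundary of the cone is controlled by the
defining function of the cone. -/
theorem exists_abs_le_mul_of_eq_zero_on_cone (n : ℕ) {c : ℝ} (hc : 0 < c) (hc1 : c < 1)
    {H : V n → ℝ} {L : NNReal} (hL : LipschitzWith L H)
    (h0 : ∀ x : V n, 1 / 2 ≤ x (Fin.last n) → x (Fin.last n) ≤ 2 → x (Fin.last n) = c * ‖x‖ →
      H x = 0) :
    ∃ C : ℝ, 0 ≤ C ∧ ∀ x : V n, 1 ≤ x (Fin.last n) → x (Fin.last n) ≤ 2 →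
      c * ‖x‖ ≤ x (Fin.last n) → |H x| ≤ C * (x (Fin.last n) ^ 2 - c ^ 2 * ‖x‖ ^ 2) := by
  obtain ⟨B, hB⟩ := (isCompact_truncatedCone n hc 1 2).exists_bound_of_continuousOn
    hL.continuous.continuousOn
  have h1c : 0 < 1 - c := sub_pos.2 hc1
  refine ⟨(L + 2 * |B|) / (1 - c), by positivity, fun x h1 h2 h3 => ?_⟩
  set q := x (Fin.last n) - c * ‖x‖ with hq
  have hq0 : 0 ≤ q := sub_nonneg.2 h3
  have hqp : q ≤ x (Fin.last n) ^ 2 - c ^ 2 * ‖x‖ ^ 2 := by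
    have : x (Fin.last n) ^ 2 - c ^ 2 * ‖x‖ ^ 2 = q * (x (Fin.last n) + c * ‖x‖) := by
      rw [hq]; ring
    rw [this]
    have h4 : 0 ≤ c * ‖x‖ := by positivity
    nlinarith
  suffices h : |H x| ≤ (L + 2 * |B|) / (1 - c) * q from
    h.trans (mul_le_mul_of_nonneg_left hqp (by positivity))
  let f : ℝ → ℝ := fun s => x (Fin.last n) - s - c * ‖x - s • Etop n‖
  have hf : Continuous f := by fun_prop
  have hf0 : f 0 = q := by simp [f, hq]
  have hE : ‖Etop n‖ = 1 := by simp [Etop]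
  have hfle : ∀ s, 0 ≤ s → f s ≤ q - (1 - c) * s := by
    intro s hs
    have h4 : ‖x‖ - s ≤ ‖x - s • Etop n‖ := by
      have := norm_sub_norm_le x (s • Etop n)
      rwa [norm_smul, hE, mul_one, norm_of_nonneg hs] at this
    simp only [f, hq]
    nlinarith
  have hs1 : 0 ≤ x (Fin.last n) - 1 / 2 := by linarith
  rw [div_mul_eq_mul_div, le_div_iff₀ h1c]
  by_cases hneg : f (x (Fin.last n) - 1 / 2) ≤ 0
  · obtain ⟨s, ⟨hs0, hs⟩, hfs⟩ := intermediate_value_Icc' hs1 hf.continuousOn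
      ⟨hneg, hf0 ▸ hq0⟩
    have hlast : (x - s • Etop n) (Fin.last n) = x (Fin.last n) - s := by simp [Etop]
    have hz : H (x - s • Etop n) = 0 := by
      apply h0 _ <;> rw [hlast]
      · linarith
      · linarith
      · simp only [f] at hfs
        linarith
    have h5 := hL.dist_le_mul x (x - s • Etop n)
    rw [hz, dist_zero_right, dist_eq_norm, sub_sub_cancel, norm_smul, hE, mul_one,
      norm_of_nonneg hs0, norm_eq_abs] at h5
    have h6 := hfle s hs0
    rw [hfs] at h6
    have h7 : (L : ℝ) * ((1 - c) * s) ≤ L * q :=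
      mul_le_mul_of_nonneg_left (by linarith) L.coe_nonneg
    have h8 : 0 ≤ 2 * |B| * q := by positivity
    nlinarith
  · have h5 := hB x ⟨h1, h2, h3⟩
    have h6 := hfle _ hs1
    rw [norm_eq_abs] at h5
    have h7 : (1 - c) ≤ 2 * q := by nlinarith
    have h8 : 0 ≤ (L : ℝ) * q := by positivity
    have h9 : |H x| * (1 - c) ≤ |B| * (2 * q) :=
      mul_le_mul (h5.trans (le_abs_self _)) h7 h1c.le (abs_nonneg _)
    linarith

theorem deriv_smoothTransition_eq_zero {y : ℝ} (hy : y < 0 ∨ 1 < y) :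
    deriv smoothTransition y = 0 := by
  rcases hy with hy | hy
  · have : smoothTransition =ᶠ[nhds y] fun _ => 0 := by
      filter_upwards [Iio_mem_nhds hy] with z hz
      exact smoothTransition.zero_of_nonpos (le_of_lt hz)
    rw [this.deriv_eq, deriv_const]
  · have : smoothTransition =ᶠ[nhds y] fun _ => 1 := by
      filter_upwards [Ioi_mem_nhds hy] with z hz
      exact smoothTransition.one_of_one_le (le_of_lt hz)
    rw [this.deriv_eq, deriv_const]

theorem exists_abs_deriv_smoothTransition_le :
    ∃ C : ℝ, 0 ≤ C ∧ ∀ y, |deriv smoothTransition y| ≤ C := by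
  have hc : Continuous (deriv smoothTransition) :=
    (smoothTransition.contDiff (n := 1)).continuous_deriv (by simp)
  obtain ⟨C, hC⟩ := (isCompact_Icc (a := (0 : ℝ)) (b := 1)).exists_bound_of_continuousOn
    hc.continuousOn
  refine ⟨|C|, abs_nonneg _, fun y => ?_⟩
  by_cases hy : y ∈ Icc (0 : ℝ) 1
  · exact (hC y hy).trans (le_abs_self _)
  · rw [deriv_smoothTransition_eq_zero, abs_zero]
    · exact abs_nonneg _
    · by_contra! h
      exact hy h

theorem det_updateRow_three {ι : Type*} [Fintype ι] [DecidableEq ι] (B : Matrix ι ι ℝ) {i l : ι}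
    (hil : i ≠ l) (e p : ι → ℝ) (hi : B i = e) (α β γ : ℝ) :
    (B.updateRow l (α • B l + β • p + γ • e)).det = α * B.det + β * (B.updateRow l p).det := by
  rw [Matrix.det_updateRow_add, Matrix.det_updateRow_add, Matrix.det_updateRow_smul,
    Matrix.det_updateRow_smul, Matrix.det_updateRow_smul]
  have h1 : (B.updateRow l e).det = 0 := by
    refine Matrix.det_zero_of_row_eq hil ?_
    rw [Matrix.updateRow_ne hil, Matrix.updateRow_self, hi]
  have h2 : B.updateRow l (B l) = B := Matrix.updateRow_eq_self B l
  rw [h1, h2, mul_zero, add_zero]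

theorem integral_cone_mul_det_eq_zero (n : ℕ) {c : ℝ} (hc : 0 < c) (hc1 : c < 1) {Q : V n → ℝ}
    (hQ : ContDiff ℝ 3 Q) (hQc : HasCompactSupport Q) {τ : ℝ}
    (h0 : ∀ x : V n, 1 / 2 ≤ x (Fin.last n) → x (Fin.last n) ≤ 2 → x (Fin.last n) = c * ‖x‖ →
      fderiv ℝ Q x (Etop n) = τ)
    {i : Fin (n + 1)} (hi : i ≠ Fin.last n) {w : ℝ → ℝ} (hw : ContDiff ℝ 2 w)
    (hws : ∀ y, y ∉ Icc (1 : ℝ) 2 → w y = 0) :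
    ∫ x in {x : V n | 0 < x (Fin.last n) ^ 2 - c ^ 2 * ‖x‖ ^ 2},
      w (x (Fin.last n)) * ((hessM n Q x).updateRow i (Pi.single (Fin.last n) 1)).det = 0 := by
  set l := Fin.last n with hl
  let p : V n → ℝ := fun x => x l ^ 2 - c ^ 2 * ‖x‖ ^ 2
  let H : V n → ℝ := fun x => fderiv ℝ Q x (Etop n) - τ
  let e : Fin (n + 1) → ℝ := Pi.single l 1
  let B : V n → Matrix (Fin (n + 1)) (Fin (n + 1)) ℝ := fun x => (hessM n Q x).updateRow i e
  let dp : V n → Fin (n + 1) → ℝ := fun x a => fderiv ℝ p x (EuclideanSpace.single a 1)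
  have hcoord : ∀ m : WithTop ℕ∞, ContDiff ℝ m fun x : V n => x l := fun m =>
    (EuclideanSpace.proj (𝕜 := ℝ) l).contDiff
  have hp : ContDiff ℝ 2 p := ((hcoord 2).pow 2).sub (contDiff_const.mul (contDiff_id.norm_sq ℝ))
  have hdQ : ∀ v : V n, ContDiff ℝ 2 fun x => fderiv ℝ Q x v := fun v =>
    (hQ.fderiv_right (by norm_num)).clm_apply contDiff_const
  have hH : ContDiff ℝ 2 H := (hdQ _).sub contDiff_const
  have hS : ContDiff ℝ 2 smoothTransition := smoothTransition.contDiff (n := 2)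
  let Φ : ℕ → Fin (n + 1) → V n → ℝ := fun m b x =>
    if b = l then smoothTransition (m * p x - 1) * w (x l) * H x
    else if b = i then x l else fderiv ℝ Q x (EuclideanSpace.single b 1)
  have hΦ : ∀ m b, ContDiff ℝ 2 (Φ m b) := by
    intro m b
    simp only [Φ]
    split_ifs
    · exact ((hS.comp ((contDiff_const.mul hp).sub contDiff_const)).mul
        (hw.comp (hcoord 2))).mul hH
    · exact hcoord 2
    · exact hdQ _
  set K := {x : V n | 1 ≤ x l ∧ x l ≤ 2 ∧ c * ‖x‖ ≤ x l} with hK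
  have hKc : IsCompact K := isCompact_truncatedCone n hc 1 2
  have hpK : ∀ x : V n, x ∉ K → w (x l) = 0 ∨ p x ≤ 0 := by
    intro x hx
    by_cases hxl : x l ∈ Icc (1 : ℝ) 2
    · right
      have h1 : x l < c * ‖x‖ := by
        by_contra! h
        exact hx ⟨hxl.1, hxl.2, h⟩
      have h2 : 0 ≤ x l := zero_le_one.trans hxl.1
      simp only [p]
      nlinarith
    · exact Or.inl (hws _ hxl)
  have hS0 : ∀ (m : ℕ) (x : V n), p x ≤ 0 → smoothTransition (m * p x - 1) = 0 ∧
      deriv smoothTransition (m * p x - 1) = 0 := by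
    intro m x hx
    have : (m : ℝ) * p x ≤ 0 := mul_nonpos_of_nonneg_of_nonpos m.cast_nonneg hx
    exact ⟨smoothTransition.zero_of_nonpos (by linarith),
      deriv_smoothTransition_eq_zero (Or.inl (by linarith))⟩
  have hΦc : ∀ m, HasCompactSupport (Φ m l) := by
    intro m
    refine HasCompactSupport.intro hKc fun x hx => ?_
    simp only [Φ, if_true]
    rcases hpK x hx with h | h
    · rw [h]; ring
    · rw [(hS0 m x h).1]; ring
  have hsymm : ∀ x (a b : Fin (n + 1)), hessM n Q x a b = hessM n Q x b a := fun x a b =>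
    (hQ.contDiffAt.isSymmSndFDerivAt (by simp; norm_num)) _ _
  have hddQ : ∀ x (v u : V n), fderiv ℝ (fun y => fderiv ℝ Q y v) x u =
      fderiv ℝ (fderiv ℝ Q) x u v := by
    intro x v u
    have h1 : HasFDerivAt (fderiv ℝ Q) (fderiv ℝ (fderiv ℝ Q) x) x :=
      ((hQ.fderiv_right (m := 2) (by norm_num)).differentiable two_ne_zero x).hasFDerivAt
    have h2 := (ContinuousLinearMap.apply ℝ ℝ v).hasFDerivAt.comp x h1
    have h3 : fderiv ℝ (fun y => fderiv ℝ Q y v) x = _ := h2.fderiv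
    rw [h3]
    rfl
  have hxl : ∀ x : V n, HasFDerivAt (fun y : V n => y l) (EuclideanSpace.proj (𝕜 := ℝ) l) x :=
    fun x => (EuclideanSpace.proj (𝕜 := ℝ) l).hasFDerivAt
  have hjac : ∀ m x, jacMat n (Φ m) x = (B x).updateRow l
      ((smoothTransition (m * p x - 1) * w (x l)) • B x l +
        (H x * w (x l) * deriv smoothTransition (m * p x - 1) * m) • dp x +
        (smoothTransition (m * p x - 1) * deriv w (x l) * H x) • e) := by
    intro m x
    ext a b
    by_cases ha : a = l
    · subst ha
      have h1 : HasFDerivAt (fun y => smoothTransition (m * p y - 1))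
          (deriv smoothTransition (m * p x - 1) • ((m : ℝ) • fderiv ℝ p x)) x :=
        ((hS.differentiable two_ne_zero _).hasDerivAt).comp_hasFDerivAt x
          ((((hp.differentiable two_ne_zero x).hasFDerivAt).const_mul (m : ℝ)).sub_const 1)
      have h2 : HasFDerivAt (fun y : V n => w (y l))
          (deriv w (x l) • (EuclideanSpace.proj (𝕜 := ℝ) l : V n →L[ℝ] ℝ)) x :=
        ((hw.differentiable two_ne_zero _).hasDerivAt).comp_hasFDerivAt x (hxl x)
      have h3 : HasFDerivAt H (fderiv ℝ H x) x :=
        (hH.differentiable two_ne_zero x).hasFDerivAt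
      have h4 := ((h1.mul h2).mul h3).congr_of_eventuallyEq (f₁ := Φ m l)
        (Filter.Eventually.of_forall fun y => by simp [Φ])
      have h5 : fderiv ℝ H x (EuclideanSpace.single b 1) = hessM n Q x l b := by
        rw [hsymm]
        have : fderiv ℝ H x = fderiv ℝ (fun y => fderiv ℝ Q y (Etop n)) x := by
          simp only [H]
          rw [fderiv_sub_const]
        rw [this, hddQ]
        rfl
      have h6 : e b = if l = b then 1 else 0 := by
        simp [e, Pi.single_apply, eq_comm]
      have h7 : B x l = hessM n Q x l := Matrix.updateRow_ne hi.symm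
      rw [jacMat, Matrix.of_apply, h4.fderiv, Matrix.updateRow_self]
      simp [h5, h6, h7, dp]
      split_ifs <;> ring
    · rw [Matrix.updateRow_ne ha, jacMat, Matrix.of_apply]
      by_cases hai : a = i
      · subst hai
        have h1 : Φ m a = fun y : V n => y l := by
          ext y; simp [Φ, ha]
        rw [h1, (hxl x).fderiv]
        simp [B, e, Pi.single_apply, eq_comm]
      · have h1 : Φ m a = fun y => fderiv ℝ Q y (EuclideanSpace.single a 1) := by
          ext y; simp [Φ, ha, hai]
        rw [h1, hddQ]
        simp only [B]
        rw [Matrix.updateRow_ne hai, hsymm]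
        rfl
  have hdet : ∀ m x, (jacMat n (Φ m) x).det =
      smoothTransition (m * p x - 1) * w (x l) * (B x).det +
        H x * w (x l) * deriv smoothTransition (m * p x - 1) * m *
          ((B x).updateRow l (dp x)).det := by
    intro m x
    rw [hjac, det_updateRow_three (B x) hi e (dp x) (by simp [B])]
  have hBc : ∀ a b, Continuous fun x => B x a b := by
    intro a b
    simp only [B, Matrix.updateRow_apply]
    split_ifs
    · exact continuous_const
    · exact continuous_hessM n hQ a b
  have hdetc : Continuous fun x => (B x).det :=
    (continuous_matrix hBc).matrix_det
  have hdpc : ∀ a, Continuous fun x => dp x a := fun a =>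
    (hp.continuous_fderiv two_ne_zero).clm_apply continuous_const
  have hdetc' : Continuous fun x => ((B x).updateRow l (dp x)).det := by
    refine (continuous_matrix fun a b => ?_).matrix_det
    simp only [Matrix.updateRow_apply]
    split_ifs
    · exact hdpc b
    · exact hBc a b
  have hwc : Continuous fun x : V n => w (x l) := hw.continuous.comp (continuous_coord n l)
  obtain ⟨CS, hCS0, hCS⟩ := exists_abs_deriv_smoothTransition_le
  obtain ⟨L, hL⟩ := ((hdQ (Etop n))).lipschitzWith_of_hasCompactSupport
    (hQc.fderiv_apply ℝ _) two_ne_zero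
  have hHL : LipschitzWith L H := by
    refine LipschitzWith.of_dist_le_mul fun x y => ?_
    simpa [H] using hL.dist_le_mul x y
  obtain ⟨CH, hCH0, hCH⟩ := exists_abs_le_mul_of_eq_zero_on_cone n hc hc1 hHL
    fun x h1 h2 h3 => sub_eq_zero.2 (h0 x h1 h2 h3)
  let bd : V n → ℝ := K.indicator fun x => |w (x l) * (B x).det| +
    CH * 2 * CS * |w (x l) * ((B x).updateRow l (dp x)).det|
  have hbdI : Integrable bd := by
    rw [integrable_indicator_iff hKc.measurableSet]
    exact (Continuous.continuousOn (by fun_prop)).integrableOn_compact hKc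
  have hbd : ∀ m x, ‖(jacMat n (Φ m) x).det‖ ≤ bd x := by
    intro m x
    rw [hdet]
    by_cases hx : x ∈ K
    · simp only [bd, indicator_of_mem hx]
      refine (norm_add_le _ _).trans (add_le_add ?_ ?_)
      · rw [mul_assoc, norm_mul, norm_of_nonneg (smoothTransition.nonneg _), norm_eq_abs]
        exact mul_le_of_le_one_left (abs_nonneg _) (smoothTransition.le_one _)
      · have h1 : |H x * (deriv smoothTransition (m * p x - 1) * m)| ≤ CH * 2 * CS := by
          by_cases h : 0 ≤ m * p x - 1 ∧ m * p x - 1 ≤ 1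
          · rw [abs_mul, abs_mul, Nat.abs_cast]
            calc |H x| * (|deriv smoothTransition (m * p x - 1)| * m)
                ≤ (CH * p x) * (CS * m) :=
                  mul_le_mul (hCH x hx.1 hx.2.1 hx.2.2)
                    (mul_le_mul_of_nonneg_right (hCS _) m.cast_nonneg) (by positivity)
                    ((abs_nonneg _).trans (hCH x hx.1 hx.2.1 hx.2.2))
              _ = CH * (m * p x) * CS := by ring
              _ ≤ CH * 2 * CS := by gcongr; linarith
          · rw [deriv_smoothTransition_eq_zero]
            · simp; positivity
            · by_contra! h'
              exact h h'
        calc _ = |H x * (deriv smoothTransition (m * p x - 1) * m)| *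
              |w (x l) * ((B x).updateRow l (dp x)).det| := by
              rw [norm_eq_abs, ← abs_mul]; congr 1; ring
          _ ≤ _ := mul_le_mul_of_nonneg_right h1 (abs_nonneg _)
    · simp only [bd, indicator_of_notMem hx]
      rcases hpK x hx with h | h
      · simp [h]
      · simp [hS0 m x h]
  have hlim : ∀ x, Filter.Tendsto (fun m : ℕ => (jacMat n (Φ m) x).det) Filter.atTop
      (nhds ({x : V n | 0 < p x}.indicator (fun x => w (x l) * (B x).det) x)) := by
    intro x
    simp_rw [hdet]
    by_cases hx : 0 < p x
    · rw [indicator_of_mem (by exact hx)]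
      obtain ⟨m0, hm0⟩ := exists_nat_gt (2 / p x)
      refine tendsto_const_nhds.congr' ?_
      filter_upwards [Filter.eventually_ge_atTop m0] with m hm
      have h1 : 2 < m * p x := by
        rw [div_lt_iff₀ hx] at hm0
        refine hm0.trans_le (mul_le_mul_of_nonneg_right (by exact_mod_cast hm) hx.le)
      rw [smoothTransition.one_of_one_le (by linarith),
        deriv_smoothTransition_eq_zero (Or.inr (by linarith))]
      ring
    · rw [indicator_of_notMem (by exact hx)]
      simp [hS0 _ x (not_lt.1 hx)]
  have hmeas : ∀ m, AEStronglyMeasurable (fun x => (jacMat n (Φ m) x).det) volume := fun m =>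
    (contDiff_det (contDiff_jacMat n (m := 1) (by norm_num) (hΦ m))).continuous.aestronglyMeasurable
  have hT := MeasureTheory.tendsto_integral_of_dominated_convergence bd hmeas hbdI
    (fun m => Filter.Eventually.of_forall (hbd m)) (Filter.Eventually.of_forall hlim)
  simp_rw [fun m => integral_det_jacMat_eq_zero n (hΦ m) l (hΦc m)] at hT
  have hpm : MeasurableSet {x : V n | 0 < p x} :=
    (isOpen_lt continuous_const hp.continuous).measurableSet
  rw [← integral_indicator hpm]
  exact (tendsto_nhds_unique tendsto_const_nhds hT).symm

/-- The circular cone around the last coordinate axis, without its apex. -/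
def circCone (n : ℕ) (c : ℝ) : Set (V n) :=
  {x | 0 < x (Fin.last n) ∧ c * ‖x‖ ≤ x (Fin.last n)}

theorem convex_circCone (n : ℕ) {c : ℝ} (hc : 0 < c) : Convex ℝ (circCone n c) := by
  rintro x ⟨hx1, hx2⟩ y ⟨hy1, hy2⟩ a b ha hb hab
  have h1 : (a • x + b • y) (Fin.last n) = a * x (Fin.last n) + b * y (Fin.last n) := by simp
  have h2 : ‖a • x + b • y‖ ≤ a * ‖x‖ + b * ‖y‖ := by
    refine (norm_add_le _ _).trans_eq ?_
    rw [norm_smul, norm_smul, norm_of_nonneg ha, norm_of_nonneg hb]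
  refine ⟨?_, ?_⟩ <;> rw [h1]
  · rcases ha.eq_or_lt with rfl | ha
    · have : b = 1 := by linarith
      simpa [this] using hy1
    · have := mul_pos ha hx1
      have := mul_nonneg hb hy1.le
      linarith
  · nlinarith

theorem uniqueDiffOn_circCone (n : ℕ) {c : ℝ} (hc : 0 < c) (hc1 : c < 1) :
    UniqueDiffOn ℝ (circCone n c) := by
  refine uniqueDiffOn_convex (convex_circCone n hc) ⟨Etop n, ?_⟩
  have ho : IsOpen {x : V n | 0 < x (Fin.last n) ∧ c * ‖x‖ < x (Fin.last n)} :=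
    (isOpen_lt continuous_const (continuous_coord n _)).inter
      (isOpen_lt (by fun_prop) (continuous_coord n _))
  have hsub : {x : V n | 0 < x (Fin.last n) ∧ c * ‖x‖ < x (Fin.last n)} ⊆ circCone n c :=
    fun x hx => ⟨hx.1, hx.2.le⟩
  exact ho.subset_interior_iff.2 hsub ⟨by simp [Etop], by simpa [Etop] using hc1⟩

theorem smul_mem_circCone {n : ℕ} {c : ℝ} {x : V n} (hx : x ∈ circCone n c) {r : ℝ} (hr : 0 < r) :
    r • x ∈ circCone n c := by
  refine ⟨by simpa using mul_pos hr hx.1, ?_⟩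
  have := mul_le_mul_of_nonneg_left hx.2 hr.le
  simp only [norm_smul, norm_of_nonneg hr.le, PiLp.smul_apply, smul_eq_mul]
  linarith

theorem smul_fderiv_smul_eq {n : ℕ} {c : ℝ} (hc : 0 < c) (hc1 : c < 1) {F : Type*}
    [NormedAddCommGroup F] [NormedSpace ℝ F] {f : V n → F}
    (hf : ∀ x ∈ circCone n c, DifferentiableAt ℝ f x) {r a : ℝ} (hr : 0 < r)
    (h : ∀ x ∈ circCone n c, f (r • x) = a • f x) {x : V n} (hx : x ∈ circCone n c) :
    r • fderiv ℝ f (r • x) = a • fderiv ℝ f x := by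
  have h1 : HasFDerivAt (fun y => f (r • y))
      ((fderiv ℝ f (r • x)).comp (r • ContinuousLinearMap.id ℝ (V n))) x :=
    (hf _ (smul_mem_circCone hx hr)).hasFDerivAt.comp x ((hasFDerivAt_id x).const_smul r)
  have h2 : HasFDerivAt (fun y => a • f y) (a • fderiv ℝ f x) x :=
    (hf x hx).hasFDerivAt.const_smul a
  have h3 := (uniqueDiffOn_circCone n hc hc1 x hx).eq
    ((h1.hasFDerivWithinAt (s := circCone n c)).congr (fun y hy => (h y hy).symm)
      (h x hx).symm) h2.hasFDerivWithinAt
  rw [← h3]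
  ext v
  simp

section Homogeneous

variable {n : ℕ} {c : ℝ} {F : V n → ℝ} {U : Set (V n)}

theorem fderiv_smul_eq_of_homogeneous (hc : 0 < c) (hc1 : c < 1) (hU : IsOpen U)
    (hUK : circCone n c ⊆ U) (hF : ContDiffOn ℝ 3 F U)
    (hhom : ∀ r : ℝ, 0 < r → ∀ x ∈ circCone n c, F (r • x) = r * F x)
    {r : ℝ} (hr : 0 < r) {x : V n} (hx : x ∈ circCone n c) :
    fderiv ℝ F (r • x) = fderiv ℝ F x := by
  refine smul_right_injective _ hr.ne' (smul_fderiv_smul_eq hc hc1 (fun y hy => ?_) hr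
    (fun y hy => hhom r hr y hy) hx)
  exact (hF.contDiffAt (hU.mem_nhds (hUK hy))).differentiableAt (by norm_num)

theorem differentiableAt_fderiv_of_contDiffOn (hU : IsOpen U) (hF : ContDiffOn ℝ 3 F U) {x : V n}
    (hx : x ∈ U) : DifferentiableAt ℝ (fderiv ℝ F) x :=
  ((hF.contDiffAt (hU.mem_nhds hx)).fderiv_right (m := 2) (by norm_num)).differentiableAt
    (by norm_num)

theorem hessM_smul_of_homogeneous (hc : 0 < c) (hc1 : c < 1) (hU : IsOpen U)
    (hUK : circCone n c ⊆ U) (hF : ContDiffOn ℝ 3 F U)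
    (hhom : ∀ r : ℝ, 0 < r → ∀ x ∈ circCone n c, F (r • x) = r * F x)
    {r : ℝ} (hr : 0 < r) {x : V n} (hx : x ∈ circCone n c) :
    hessM n F (r • x) = r⁻¹ • hessM n F x := by
  have h := smul_fderiv_smul_eq hc hc1 (f := fderiv ℝ F) (a := 1)
    (fun y hy => differentiableAt_fderiv_of_contDiffOn hU hF (hUK hy)) hr
    (fun y hy => by
      rw [one_smul]; exact fderiv_smul_eq_of_homogeneous hc hc1 hU hUK hF hhom hr hy) hx
  rw [one_smul] at h
  ext a b
  simp only [hessM, Matrix.smul_apply, ← h]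
  simp [hr.ne']

theorem fderiv_fderiv_self_of_homogeneous (hc : 0 < c) (hc1 : c < 1) (hU : IsOpen U)
    (hUK : circCone n c ⊆ U) (hF : ContDiffOn ℝ 3 F U)
    (hhom : ∀ r : ℝ, 0 < r → ∀ x ∈ circCone n c, F (r • x) = r * F x)
    {x : V n} (hx : x ∈ circCone n c) :
    fderiv ℝ (fderiv ℝ F) x x = 0 := by
  have h1 : HasDerivAt (fun r : ℝ => r • x) ((1 : ℝ) • x) 1 := (hasDerivAt_id 1).smul_const x
  have hd := (differentiableAt_fderiv_of_contDiffOn hU hF (hUK hx)).hasFDerivAt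
  have h2 : HasDerivAt (fun r : ℝ => fderiv ℝ F (r • x)) (fderiv ℝ (fderiv ℝ F) x ((1 : ℝ) • x))
      1 := by
    refine HasFDerivAt.comp_hasDerivAt (1 : ℝ) ?_ h1
    rwa [one_smul]
  have h3 : (fun r : ℝ => fderiv ℝ F (r • x)) =ᶠ[nhds 1] fun _ => fderiv ℝ F x := by
    filter_upwards [Ioi_mem_nhds zero_lt_one] with r hr
    exact fderiv_smul_eq_of_homogeneous hc hc1 hU hUK hF hhom hr hx
  have h4 := (h2.congr_of_eventuallyEq h3.symm).unique (hasDerivAt_const _ _)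
  rwa [one_smul] at h4

theorem hessM_mulVec_self_of_homogeneous (hc : 0 < c) (hc1 : c < 1) (hU : IsOpen U)
    (hUK : circCone n c ⊆ U) (hF : ContDiffOn ℝ 3 F U)
    (hhom : ∀ r : ℝ, 0 < r → ∀ x ∈ circCone n c, F (r • x) = r * F x)
    {x : V n} (hx : x ∈ circCone n c) :
    (hessM n F x).mulVec x = 0 := by
  ext a
  have hsymm : IsSymmSndFDerivAt ℝ F x :=
    (hF.contDiffAt (hU.mem_nhds (hUK hx))).isSymmSndFDerivAt (by simp; norm_num)
  have hxs : x = ∑ b, x b • EuclideanSpace.single b (1 : ℝ) := by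
    ext b
    simp [Finset.sum_apply, Pi.single_apply]
  calc (hessM n F x).mulVec x a
      = fderiv ℝ (fderiv ℝ F) x (EuclideanSpace.single a 1) x := by
        have h1 := congrArg (fderiv ℝ (fderiv ℝ F) x (EuclideanSpace.single a 1)) hxs
        rw [h1, map_sum]
        simp [Matrix.mulVec, dotProduct, hessM, mul_comm]
    _ = fderiv ℝ (fderiv ℝ F) x x (EuclideanSpace.single a 1) := hsymm _ _
    _ = 0 := by
      rw [fderiv_fderiv_self_of_homogeneous hc hc1 hU hUK hF hhom hx, _root_.zero_apply]

theorem transpose_hessM (hU : IsOpen U) (hF : ContDiffOn ℝ 3 F U) {x : V n} (hx : x ∈ U) :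
    (hessM n F x).transpose = hessM n F x := by
  ext a b
  exact (hF.contDiffAt (hU.mem_nhds hx)).isSymmSndFDerivAt (by simp; norm_num) _ _

end Homogeneous

theorem hasFDerivAt_norm_inner {n : ℕ} {x : V n} (hx : x ≠ 0) :
    HasFDerivAt (fun y : V n => ‖y‖) (‖x‖⁻¹ • innerSL ℝ x) x := by
  have h1 := (hasStrictFDerivAt_norm_sq x).hasFDerivAt.sqrt (pow_ne_zero 2 (norm_ne_zero_iff.2 hx))
  refine (h1.congr_of_eventuallyEq (Filter.Eventually.of_forall fun y => ?_)).congr_fderiv ?_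
  · simp [Real.sqrt_sq (norm_nonneg y)]
  · rw [Real.sqrt_sq (norm_nonneg x)]
    ext v
    simp
    ring

theorem hessM_add_smul_norm {n : ℕ} {F : V n → ℝ} {u : V n} (hu : ‖u‖ = 1)
    (hF : ContDiffAt ℝ 3 F u) (t : ℝ) :
    hessM n (fun x => F x + t * ‖x‖) u =
      hessM n F u + t • (1 - Matrix.vecMulVec u u) := by
  have hu0 : u ≠ 0 := by
    rintro rfl
    simp at hu
  have h1 : fderiv ℝ (fun x => F x + t * ‖x‖) =ᶠ[nhds u]
      fun x => fderiv ℝ F x + t • (‖x‖⁻¹ • innerSL ℝ x) := by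
    filter_upwards [isOpen_ne.mem_nhds hu0, hF.eventually (by simp)] with x hx hFx
    exact ((hFx.differentiableAt (by norm_num)).hasFDerivAt.add
      ((hasFDerivAt_norm_inner hx).const_mul t)).fderiv
  have h2 : HasFDerivAt (fun x : V n => ‖x‖⁻¹) (-(innerSL ℝ u)) u := by
    have := (hasDerivAt_inv (x := ‖u‖) (by simp [hu])).comp_hasFDerivAt u
      (hasFDerivAt_norm_inner hu0)
    refine this.congr_fderiv ?_
    simp [hu]
  have h3 : HasFDerivAt (fun x : V n => innerSL ℝ x) (innerSL ℝ : V n →L[ℝ] V n →L[ℝ] ℝ) u :=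
    (innerSL ℝ : V n →L[ℝ] V n →L[ℝ] ℝ).hasFDerivAt
  have h4 : HasFDerivAt (fderiv ℝ F) (fderiv ℝ (fderiv ℝ F) u) u :=
    ((hF.fderiv_right (m := 2) (by norm_num)).differentiableAt (by norm_num)).hasFDerivAt
  have h5 := ((h4.add ((h2.smul h3).const_smul t)).congr_of_eventuallyEq h1).fderiv
  ext a b
  have h6 : ∀ v w : V n, innerSL ℝ v w = ⟪v, w⟫ := fun _ _ => rfl
  simp [hessM, h5, h6, hu, Matrix.one_apply, Matrix.vecMulVec_apply,
    EuclideanSpace.inner_single_right, eq_comm]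
  split_ifs <;> ring

open Manifold in
theorem exists_contDiff_hasCompactSupport_eventuallyEq {n : ℕ} {K U : Set (V n)}
    (hK : IsCompact K) (hU : IsOpen U) (hKU : K ⊆ U) {F : V n → ℝ} (hF : ContDiffOn ℝ 3 F U) :
    ∃ Q : V n → ℝ, ContDiff ℝ 3 Q ∧ HasCompactSupport Q ∧ ∀ x ∈ K, Q =ᶠ[nhds x] F := by
  obtain ⟨T, hT, hKT, hTU⟩ := exists_compact_between hK hU hKU
  obtain ⟨ψ, hψ1, hψ0, -⟩ := exists_contMDiffMap_one_nhds_of_subset_interior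
    (n := 3) 𝓘(ℝ, V n) hK.isClosed hKT
  have hψ : ContDiff ℝ 3 ψ := ψ.contMDiff.contDiff
  have hs : HasCompactSupport ψ := HasCompactSupport.intro hT hψ0
  refine ⟨fun x => ψ x * F x, ?_, hs.mul_right, fun x hx => ?_⟩
  · have hts : tsupport ψ ⊆ T :=
      closure_minimal (fun x hx => by_contra fun h => hx (hψ0 x h)) hT.isClosed
    rw [contDiff_iff_contDiffAt]
    intro x
    by_cases hx : x ∈ T
    · exact hψ.contDiffAt.mul (hF.contDiffAt (hU.mem_nhds (hTU hx)))
    · refine (contDiffAt_const (c := (0 : ℝ))).congr_of_eventuallyEq ?_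
      filter_upwards [hT.isClosed.isOpen_compl.mem_nhds hx] with y hy
      rw [hψ0 y hy, zero_mul]
  · filter_upwards [Filter.Eventually.filter_mono (nhds_le_nhdsSet hx) hψ1] with y hy
    rw [hy, one_mul]

theorem integral_eq_integral_sphere_Ioi {n : ℕ} {g : V n → ℝ} (hg : Integrable g) :
    ∫ x, g x = ∫ u : Metric.sphere (0 : V n) 1, (∫ r in Ioi (0 : ℝ), r ^ n * g (r • (u : V n)))
      ∂(volume : Measure (V n)).toSphere := by
  have hmp := (volume : Measure (V n)).measurePreserving_homeomorphUnitSphereProd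
  have hemb := (homeomorphUnitSphereProd (V n)).measurableEmbedding
  have hdim : Module.finrank ℝ (V n) - 1 = n := by simp
  rw [hdim] at hmp
  let g' : Metric.sphere (0 : V n) 1 × Ioi (0 : ℝ) → ℝ := fun q => g ((q.2 : ℝ) • (q.1 : V n))
  have hg' : ∀ x : ({0}ᶜ : Set (V n)), g' (homeomorphUnitSphereProd (V n) x) = g x := by
    intro x
    have : (homeomorphUnitSphereProd (V n)).symm (homeomorphUnitSphereProd (V n) x) = x :=
      Homeomorph.symm_apply_apply _ _
    conv_rhs => rw [← this]
    rfl
  have hint : Integrable g' ((volume : Measure (V n)).toSphere.prod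
      (Measure.volumeIoiPow n)) := by
    rw [← hmp.integrable_comp_emb hemb]
    have : g' ∘ homeomorphUnitSphereProd (V n) = fun x : ({0}ᶜ : Set (V n)) => g x := funext hg'
    rw [this]
    exact (integrableOn_iff_comap_subtypeVal (measurableSet_singleton _).compl).1 hg.integrableOn
  calc ∫ x, g x = ∫ x : ({(0)}ᶜ : Set (V n)), g x ∂((volume : Measure (V n)).comap (↑)) := by
        rw [integral_subtype_comap (measurableSet_singleton _).compl g, restrict_compl_singleton]
    _ = ∫ q, g' q ∂(volume : Measure (V n)).toSphere.prod (.volumeIoiPow n) := by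
        rw [← hmp.integral_comp hemb]
        simp_rw [hg']
    _ = ∫ u, ∫ r, g' (u, r) ∂(.volumeIoiPow n) ∂(volume : Measure (V n)).toSphere :=
        integral_prod _ hint
    _ = _ := by
        refine integral_congr_ae (Filter.Eventually.of_forall fun u => ?_)
        simp only [g', Measure.volumeIoiPow, ENNReal.ofReal]
        rw [integral_withDensity_eq_integral_smul,
          integral_subtype_comap measurableSet_Ioi
            fun a : ℝ => Real.toNNReal (a ^ n) • g (a • (u : V n))]
        · refine setIntegral_congr_fun measurableSet_Ioi fun x hx => ?_
          simp only [NNReal.smul_def, Real.coe_toNNReal _ (pow_nonneg (le_of_lt hx) _), smul_eq_mul]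
        · exact (measurable_subtype_coe.pow_const _).real_toNNReal

theorem exists_contDiff_weight :
    ∃ w : ℝ → ℝ, ContDiff ℝ 2 w ∧ (∀ y, y ∉ Icc (1 : ℝ) 2 → w y = 0) ∧
      0 < ∫ y in Ioi (0 : ℝ), w y := by
  let f : ContDiffBump (3 / 2 : ℝ) := ⟨1 / 4, 1 / 2, by norm_num, by norm_num⟩
  have h0 : ∀ y, y ∉ Icc (1 : ℝ) 2 → f y = 0 := by
    intro y hy
    refine f.zero_of_le_dist ?_
    by_contra! h
    rw [Real.dist_eq, abs_lt] at h
    simp only [f] at h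
    exact hy ⟨by linarith [h.1], by linarith [h.2]⟩
  refine ⟨f, f.contDiff, h0, ?_⟩
  rw [setIntegral_eq_integral_of_forall_compl_eq_zero fun y hy => h0 y fun h =>
    hy (mem_Ioi.2 (zero_lt_one.trans_le h.1))]
  exact f.integral_pos

theorem setIntegral_adjugate_hessM_eq_zero {n : ℕ} {c : ℝ} {F : V n → ℝ} {U : Set (V n)}
    (hc : 0 < c) (hc1 : c < 1) (hU : IsOpen U)
    (hUK : circCone n c ⊆ U) (hF : ContDiffOn ℝ 3 F U)
    (hhom : ∀ r : ℝ, 0 < r → ∀ x ∈ circCone n c, F (r • x) = r * F x) {τ : ℝ}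
    (hτ : ∀ u : V n, ‖u‖ = 1 → u (Fin.last n) = c → fderiv ℝ F u (Etop n) = τ)
    {i : Fin (n + 1)} (hi : i ≠ Fin.last n) :
    ∫ u in {u : Metric.sphere (0 : V n) 1 | c < (u : V n) (Fin.last n)},
      ((u : V n) (Fin.last n))⁻¹ * (hessM n F u).adjugate (Fin.last n) i
        ∂(volume : Measure (V n)).toSphere = 0 := by
  obtain ⟨w, hw, hws, hwpos⟩ := exists_contDiff_weight
  have hK := isCompact_truncatedCone n hc (1 / 2) 2
  have hKcone : {x : V n | 1 / 2 ≤ x (Fin.last n) ∧ x (Fin.last n) ≤ 2 ∧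
      c * ‖x‖ ≤ x (Fin.last n)} ⊆ circCone n c := fun x hx =>
    ⟨lt_of_lt_of_le (by norm_num) hx.1, hx.2.2⟩
  obtain ⟨Q, hQ, hQc, hQF⟩ :=
    exists_contDiff_hasCompactSupport_eventuallyEq hK hU (hKcone.trans hUK) hF
  have h0 : ∀ x : V n, 1 / 2 ≤ x (Fin.last n) → x (Fin.last n) ≤ 2 →
      x (Fin.last n) = c * ‖x‖ → fderiv ℝ Q x (Etop n) = τ := by
    intro x h1 h2 h3
    have hxK : x ∈ {x : V n | 1 / 2 ≤ x (Fin.last n) ∧ x (Fin.last n) ≤ 2 ∧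
      c * ‖x‖ ≤ x (Fin.last n)} := ⟨h1, h2, h3.ge⟩
    have hx0 : 0 < ‖x‖ := by
      rw [norm_pos_iff]
      rintro rfl
      norm_num at h1
    rw [(hQF x hxK).fderiv_eq, ← fderiv_smul_eq_of_homogeneous hc hc1 hU hUK hF hhom
      (inv_pos.2 hx0) (hKcone hxK)]
    refine hτ _ ?_ ?_
    · rw [norm_smul, norm_inv, norm_norm, inv_mul_cancel₀ hx0.ne']
    · rw [PiLp.smul_apply, smul_eq_mul, h3, mul_comm c, inv_mul_cancel_left₀ hx0.ne']
  let A : V n → ℝ := fun x => (hessM n Q x).adjugate (Fin.last n) i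
  have hE := integral_cone_mul_det_eq_zero n hc hc1 hQ hQc h0 hi hw hws
  simp_rw [← Matrix.adjugate_apply] at hE
  set P := {x : V n | 0 < x (Fin.last n) ^ 2 - c ^ 2 * ‖x‖ ^ 2} with hP
  have hpc : Continuous fun x : V n => x (Fin.last n) ^ 2 - c ^ 2 * ‖x‖ ^ 2 := by
    have := continuous_coord n (Fin.last n)
    fun_prop
  have hPm : MeasurableSet P := (isOpen_lt continuous_const hpc).measurableSet
  have hAc : Continuous A :=
    (continuous_matrix fun a b => continuous_hessM n hQ a b).matrix_adjugate.matrix_elem _ _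
  have hφ : Continuous fun x : V n => w (x (Fin.last n)) * A x :=
    (hw.continuous.comp (continuous_coord n _)).mul hAc
  have hint : IntegrableOn (fun x : V n => w (x (Fin.last n)) * A x) P := by
    refine (hφ.continuousOn.integrableOn_compact hK).of_forall_sdiff_eq_zero hPm ?_
    rintro x ⟨hxP, hxK⟩
    rw [hws, zero_mul]
    intro hxl
    refine hxK ⟨by linarith [hxl.1], hxl.2, ?_⟩
    rw [hP, mem_ofPred_eq] at hxP
    refine (abs_le_of_sq_le_sq' (a := c * ‖x‖) ?_ (by linarith [hxl.1])).2
    rw [mul_pow]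
    linarith
  rw [← integral_indicator hPm, integral_eq_integral_sphere_Ioi (hint.integrable_indicator hPm)]
    at hE
  let S : Set (Metric.sphere (0 : V n) 1) := {u | c < (u : V n) (Fin.last n)}
  let W : ℝ := ∫ y in Ioi (0 : ℝ), w y
  have key : ∀ u : Metric.sphere (0 : V n) 1,
      ∫ r in Ioi (0 : ℝ), r ^ n * P.indicator (fun x : V n => w (x (Fin.last n)) * A x)
        (r • (u : V n)) = W * S.indicator (fun u => ((u : V n) (Fin.last n))⁻¹ *
          (hessM n F u).adjugate (Fin.last n) i) u := by
    intro u
    have hu : ‖(u : V n)‖ = 1 := norm_eq_of_mem_sphere u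
    have hlast : ∀ r : ℝ, (r • (u : V n)) (Fin.last n) = r * (u : V n) (Fin.last n) := fun r => by
      simp
    have hrP : ∀ r : ℝ, 0 < r → (r • (u : V n) ∈ P ↔ c ^ 2 < (u : V n) (Fin.last n) ^ 2) := by
      intro r hr
      rw [hP, mem_ofPred_eq, hlast, norm_smul, hu, norm_of_nonneg hr.le]
      have : (r * (u : V n) (Fin.last n)) ^ 2 - c ^ 2 * (r * 1) ^ 2 =
          r ^ 2 * ((u : V n) (Fin.last n) ^ 2 - c ^ 2) := by ring
      rw [this, mul_pos_iff_of_pos_left (by positivity), sub_pos]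
    by_cases hcu : c < (u : V n) (Fin.last n)
    · have hul : 0 < (u : V n) (Fin.last n) := hc.trans hcu
      have huK : (u : V n) ∈ circCone n c := ⟨hul, by rw [hu, mul_one]; exact hcu.le⟩
      have h1 : ∀ r ∈ Ioi (0 : ℝ), r ^ n * P.indicator
          (fun x : V n => w (x (Fin.last n)) * A x) (r • (u : V n)) =
          w (r * (u : V n) (Fin.last n)) * (hessM n F u).adjugate (Fin.last n) i := by
        intro r hr
        have hr0 : 0 < r := hr
        rw [indicator_of_mem ((hrP r hr).2 (by nlinarith)), hlast]
        by_cases hrI : r * (u : V n) (Fin.last n) ∈ Icc (1 : ℝ) 2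
        · have hmem : r • (u : V n) ∈ {x : V n | 1 / 2 ≤ x (Fin.last n) ∧ x (Fin.last n) ≤ 2 ∧
              c * ‖x‖ ≤ x (Fin.last n)} := by
            refine ⟨?_, ?_, (smul_mem_circCone huK hr).2⟩ <;> rw [hlast]
            · linarith [hrI.1]
            · exact hrI.2
          have h2 : hessM n Q (r • (u : V n)) = r⁻¹ • hessM n F u := by
            rw [← hessM_smul_of_homogeneous hc hc1 hU hUK hF hhom hr huK]
            ext a b
            simp only [hessM, (hQF _ hmem).fderiv.fderiv_eq]
          simp only [A, h2, Matrix.adjugate_smul, Matrix.smul_apply, smul_eq_mul, Fintype.card_fin,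
            Nat.add_sub_cancel]
          have : r ^ n * r⁻¹ ^ n = 1 := by
            rw [← mul_pow, mul_inv_cancel₀ hr0.ne', one_pow]
          linear_combination (w (r * (u : V n) (Fin.last n)) *
            (hessM n F u).adjugate (Fin.last n) i) * this
        · rw [hws _ hrI]; ring
      rw [setIntegral_congr_fun measurableSet_Ioi h1, integral_mul_const,
        integral_comp_mul_right_Ioi w 0 hul, zero_mul, indicator_of_mem (by exact hcu), smul_eq_mul]
      ring
    · rw [indicator_of_notMem (by exact hcu), mul_zero]
      refine setIntegral_eq_zero_of_forall_eq_zero fun r hr => ?_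
      have hr0 : 0 < r := hr
      by_cases hrm : r • (u : V n) ∈ P
      · rw [indicator_of_mem hrm, hlast, hws]
        · ring
        · intro h
          have h3 := (hrP r hr).1 hrm
          have h4 : 0 < (u : V n) (Fin.last n) := by
            by_contra! h5
            have := mul_nonpos_of_nonneg_of_nonpos hr0.le h5
            linarith [h.1]
          exact hcu (lt_of_pow_lt_pow_left₀ 2 h4.le h3)
      · rw [indicator_of_notMem hrm, mul_zero]
  simp_rw [key] at hE
  rw [integral_const_mul] at hE
  have hSm : MeasurableSet S :=
    (isOpen_lt continuous_const ((continuous_coord n _).comp continuous_subtype_val)).measurableSet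
  rw [integral_indicator hSm] at hE
  exact (mul_eq_zero.1 hE).resolve_left hwpos.ne'

theorem continuous_charpoly_coeff {ι : Type*} [Fintype ι] [DecidableEq ι] (j : ℕ) :
    Continuous fun M : Matrix ι ι ℝ => M.charpoly.coeff j := by
  have h : (fun M : Matrix ι ι ℝ => M.charpoly.coeff j) = fun M =>
      MvPolynomial.eval (fun q : ι × ι => M q.1 q.2) ((Matrix.charpoly.univ ℝ ι).coeff j) := by
    ext M
    exact (Matrix.charpoly.univ_coeff_eval₂Hom ι (RingHom.id ℝ) (fun q => M q.1 q.2) j).symm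
  rw [h]
  exact (MvPolynomial.continuous_eval _).comp
    (continuous_pi fun q => continuous_id.matrix_elem q.1 q.2)

theorem continuousOn_sigmaElem {n : ℕ} {G : V n → ℝ} {U : Set (V n)} (hU : IsOpen U)
    (hG : ContDiffOn ℝ 3 G U) (j : ℕ) : ContinuousOn (sigmaElem n j G) U := by
  intro x hx
  have h1 : ContDiffAt ℝ 1 (fderiv ℝ (fderiv ℝ G)) x :=
    ((hG.contDiffAt (hU.mem_nhds hx)).fderiv_right (m := 2) (by norm_num)).fderiv_right
      (by norm_num)
  have h2 : ContinuousAt (fun y => hessM n G y) x :=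
    continuousAt_pi.2 fun a => continuousAt_pi.2 fun b =>
      (h1.continuousAt.clm_apply continuousAt_const).clm_apply continuousAt_const
  exact (continuousAt_const.mul
    ((continuous_charpoly_coeff (n + 1 - j)).continuousAt.comp h2)).continuousWithinAt

theorem continuous_sphere_coord (n : ℕ) (i : Fin (n + 1)) :
    Continuous fun u : Metric.sphere (0 : V n) 1 => (u : V n) i :=
  (continuous_coord n i).comp continuous_subtype_val

theorem toSphere_latitude_eq_zero (n : ℕ) {c : ℝ} (hc : 0 < c) (hc1 : c < 1) :
    (volume : Measure (V n)).toSphere {u | (u : V n) (Fin.last n) = c} = 0 := by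
  have hm : MeasurableSet {u : Metric.sphere (0 : V n) 1 | (u : V n) (Fin.last n) = c} :=
    (continuous_sphere_coord n (Fin.last n)).measurable (measurableSet_singleton c)
  rw [Measure.toSphere_apply' _ hm]
  refine mul_eq_zero_of_right _ (measure_mono_null ?_
    ((convex_circCone n hc).addHaar_frontier (volume : Measure (V n))))
  rintro _ ⟨r, hr, _, ⟨u, hu, rfl⟩, rfl⟩
  have hr0 : 0 < r := hr.1
  have hun : ‖(u : V n)‖ = 1 := norm_eq_of_mem_sphere u
  have hul : (u : V n) (Fin.last n) = c := hu
  have hx : r • (u : V n) ∈ circCone n c := by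
    refine smul_mem_circCone ⟨?_, ?_⟩ hr0 <;> rw [hul]
    · exact hc
    · rw [hun, mul_one]
  refine ⟨subset_closure hx, fun hint => ?_⟩
  have hcont : Continuous fun ε : ℝ => r • (u : V n) - ε • Etop n := by fun_prop
  have hev : ∀ᶠ ε in nhds (0 : ℝ), r • (u : V n) - ε • Etop n ∈ interior (circCone n c) := by
    refine hcont.continuousAt.eventually_mem (isOpen_interior.mem_nhds ?_)
    simpa using hint
  obtain ⟨ε, hε, hε0⟩ := ((hev.filter_mono nhdsWithin_le_nhds).and
    (self_mem_nhdsWithin (s := Ioi (0 : ℝ)))).exists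
  have hε0' : 0 < ε := hε0
  have h1 := (interior_subset hε).2
  have h2 : (r • (u : V n) - ε • Etop n) (Fin.last n) = r * c - ε := by simp [Etop, hul]
  have h3 : r - ε ≤ ‖r • (u : V n) - ε • Etop n‖ := by
    have := norm_sub_norm_le (r • (u : V n)) (ε • Etop n)
    rw [norm_smul, norm_smul, hun, norm_of_nonneg hr0.le, norm_of_nonneg hε0'.le] at this
    simpa [Etop] using this
  rw [h2] at h1
  nlinarith

theorem eq_zero_of_sum_mul_pow_eq_zero (n : ℕ) (I : ℕ → ℝ)
    (h : ∀ t : ℝ, 0 < t → ∑ j ∈ Finset.range (n + 1), I j * t ^ (n - j) = 0) {k : ℕ}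
    (hk : k ≤ n) : I k = 0 := by
  let p : Polynomial ℝ := ∑ j ∈ Finset.range (n + 1), Polynomial.monomial (n - j) (I j)
  have hp : p = 0 := by
    refine Polynomial.eq_zero_of_infinite_isRoot p ((Ioi_infinite (0 : ℝ)).mono fun t ht => ?_)
    simpa [p, Polynomial.IsRoot, Polynomial.eval_finsetSum] using h t ht
  have hcoeff := congrArg (fun q : Polynomial ℝ => q.coeff (n - k)) hp
  simp only [p, Polynomial.finsetSum_coeff, Polynomial.coeff_monomial, Polynomial.coeff_zero]
    at hcoeff
  rw [Finset.sum_eq_single k] at hcoeff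
  · simpa using hcoeff
  · intro j hj hjk
    have := Finset.mem_range.1 hj
    rw [if_neg (by omega)]
  · intro hk'
    exact absurd (Finset.mem_range.2 (by omega)) hk'

theorem adjugate_hessM_add_smul_norm {n : ℕ} {c : ℝ} {G : V n → ℝ} {U : Set (V n)}
    (hc : 0 < c) (hc1 : c < 1) (hU : IsOpen U)
    (hUK : circCone n c ⊆ U) (hG : ContDiffOn ℝ 3 G U)
    (hhom : ∀ r : ℝ, 0 < r → ∀ x ∈ circCone n c, G (r • x) = r * G x)
    {u : V n} (hu : ‖u‖ = 1) (huK : u ∈ circCone n c) {t : ℝ} (ht : t ≠ 0) (a b : Fin (n + 1)) :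
    (hessM n (fun x => G x + t * ‖x‖) u).adjugate a b =
      (∑ j ∈ Finset.range (n + 1), sigmaElem n j G u * t ^ (n - j)) * (u a * u b) := by
  have huu : (u : Fin (n + 1) → ℝ) ⬝ᵥ u = 1 := by
    have := EuclideanSpace.real_norm_sq_eq u
    rw [hu] at this
    simp only [dotProduct, ← sq]
    linarith
  have hMu := hessM_mulVec_self_of_homogeneous hc hc1 hU hUK hG hhom huK
  have hdet : (hessM n G u).det = 0 := by
    refine Matrix.exists_mulVec_eq_zero_iff.1 ⟨u, fun h => ?_, hMu⟩
    rw [h] at huu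
    simp at huu
  rw [hessM_add_smul_norm hu (hG.contDiffAt (hU.mem_nhds (hUK huK))),
    adjugate_add_smul_one_sub_vecMulVec _ (transpose_hessM hU hG (hUK huK)) _ huu hMu t ht,
    det_add_smul_one_eq_sum n _ hdet t ht, Matrix.smul_apply, Matrix.vecMulVec_apply, smul_eq_mul]
  rfl

theorem setIntegral_sum_sigmaElem_eq_zero {n : ℕ} {c : ℝ} {G : V n → ℝ} {U : Set (V n)}
    (hc : 0 < c) (hc1 : c < 1) (hU : IsOpen U)
    (hUK : circCone n c ⊆ U) (hG : ContDiffOn ℝ 3 G U)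
    (hhom : ∀ r : ℝ, 0 < r → ∀ x ∈ circCone n c, G (r • x) = r * G x)
    (hcap : ∀ u : V n, ‖u‖ = 1 → u (Fin.last n) = c → fderiv ℝ G u (Etop n) = 0)
    {i : Fin (n + 1)} (hi : i ≠ Fin.last n) {t : ℝ} (ht : 0 < t) :
    ∫ u in {u : Metric.sphere (0 : V n) 1 | c ≤ (u : V n) (Fin.last n)},
      (∑ j ∈ Finset.range (n + 1), sigmaElem n j G u * t ^ (n - j)) * (u : V n) i
        ∂(volume : Measure (V n)).toSphere = 0 := by
  have hne : circCone n c ⊆ {x : V n | x ≠ 0} := by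
    rintro x hx rfl
    simpa using hx.1
  have hnorm : ContDiffOn ℝ 3 (fun x : V n => ‖x‖) {x : V n | x ≠ 0} := fun x hx =>
    (contDiffAt_norm ℝ hx).contDiffWithinAt
  have h := setIntegral_adjugate_hessM_eq_zero (F := fun x => G x + t * ‖x‖) (τ := t * c) hc hc1
    (hU.inter isOpen_ne) (subset_inter hUK hne)
    ((hG.mono inter_subset_left).add (contDiffOn_const.mul (hnorm.mono inter_subset_right)))
    (fun r hr x hx => by
      rw [hhom r hr x hx, norm_smul, norm_of_nonneg hr.le]; ring)
    (fun u hu hul => by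
      have huK : u ∈ circCone n c := ⟨hul ▸ hc, by rw [hul, hu, mul_one]⟩
      have h1 := ((hG.contDiffAt (hU.mem_nhds (hUK huK))).differentiableAt
        (by norm_num)).hasFDerivAt.add ((hasFDerivAt_norm_inner (hne huK)).const_mul t)
      have h2 : fderiv ℝ (fun x => G x + t * ‖x‖) u = _ := h1.fderiv
      rw [h2, _root_.add_apply, hcap u hu hul]
      simp [hu, Etop, EuclideanSpace.inner_single_right, hul]) hi
  have hlt : {u : Metric.sphere (0 : V n) 1 | c < (u : V n) (Fin.last n)}
      =ᵐ[(volume : Measure (V n)).toSphere] {u | c ≤ (u : V n) (Fin.last n)} := by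
    have h0 : ∀ᵐ u : Metric.sphere (0 : V n) 1 ∂(volume : Measure (V n)).toSphere,
      ¬ (u : V n) (Fin.last n) = c :=
      ae_iff.2 (by simpa using toSphere_latitude_eq_zero n hc hc1)
    filter_upwards [h0] with u hu
    exact propext ⟨fun h => le_of_lt h, fun h => lt_of_le_of_ne h (Ne.symm hu)⟩
  rw [← setIntegral_congr_set hlt, ← h]
  have hm : MeasurableSet {u : Metric.sphere (0 : V n) 1 | c < (u : V n) (Fin.last n)} :=
    (isOpen_lt continuous_const (continuous_sphere_coord n _)).measurableSet
  refine setIntegral_congr_fun hm fun u hcu => ?_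
  have hcu' : c < (u : V n) (Fin.last n) := hcu
  have hu : ‖(u : V n)‖ = 1 := norm_eq_of_mem_sphere u
  have hul : 0 < (u : V n) (Fin.last n) := hc.trans hcu'
  simp only
  rw [adjugate_hessM_add_smul_norm hc hc1 hU hUK hG hhom hu
    ⟨hul, by rw [hu, mul_one]; exact hcu'.le⟩ ht.ne']
  field_simp

theorem setIntegral_sigmaElem_mul_coord_eq_zero {n : ℕ} {c : ℝ} {G : V n → ℝ} {U : Set (V n)}
    (hc : 0 < c) (hc1 : c < 1) (hU : IsOpen U)
    (hUK : circCone n c ⊆ U) (hG : ContDiffOn ℝ 3 G U)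
    (hhom : ∀ r : ℝ, 0 < r → ∀ x ∈ circCone n c, G (r • x) = r * G x)
    (hcap : ∀ u : V n, ‖u‖ = 1 → u (Fin.last n) = c → fderiv ℝ G u (Etop n) = 0)
    {i : Fin (n + 1)} (hi : i ≠ Fin.last n) {k : ℕ} (hk : k ≤ n) :
    ∫ u in {u : Metric.sphere (0 : V n) 1 | c ≤ (u : V n) (Fin.last n)},
      sigmaElem n k G u * (u : V n) i ∂(volume : Measure (V n)).toSphere = 0 := by
  have hcl : IsClosed {u : Metric.sphere (0 : V n) 1 | c ≤ (u : V n) (Fin.last n)} :=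
    isClosed_le continuous_const (continuous_sphere_coord n _)
  have hint : ∀ j, IntegrableOn (fun u : Metric.sphere (0 : V n) 1 =>
      sigmaElem n j G u * (u : V n) i) {u | c ≤ (u : V n) (Fin.last n)}
      (volume : Measure (V n)).toSphere := by
    intro j
    have hσ : ContinuousOn (fun u : Metric.sphere (0 : V n) 1 => sigmaElem n j G u)
        {u | c ≤ (u : V n) (Fin.last n)} := by
      refine (continuousOn_sigmaElem hU hG j).comp continuous_subtype_val.continuousOn
        fun u hu => ?_
      have hu' : c ≤ (u : V n) (Fin.last n) := hu
      exact hUK ⟨hc.trans_le hu', by rwa [norm_eq_of_mem_sphere u, mul_one]⟩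
    exact (hσ.mul (continuous_sphere_coord n i).continuousOn).integrableOn_compact hcl.isCompact
  refine eq_zero_of_sum_mul_pow_eq_zero n (fun j => ∫ u in {u : Metric.sphere (0 : V n) 1 |
    c ≤ (u : V n) (Fin.last n)}, sigmaElem n j G u * (u : V n) i
      ∂(volume : Measure (V n)).toSphere) (fun t ht => ?_) hk
  rw [← setIntegral_sum_sigmaElem_eq_zero hc hc1 hU hUK hG hhom hcap hi ht]
  simp_rw [← integral_mul_const]
  rw [← integral_finsetSum _ fun j _ => (hint j).mul_const _]
  refine integral_congr_ae (Filter.Eventually.of_forall fun u => ?_)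
  simp only [Finset.sum_mul]
  exact Finset.sum_congr rfl fun j _ => by ring

/-- the horizontal components of the `σ_k` curvature measure vanish. -/
theorem capillary_sigmaK_orthogonality (n k : ℕ) (hn : 1 ≤ n) (θ : ℝ)
    (hθ : θ ∈ Ioo 0 (π / 2)) (hk : 1 ≤ k) (hkn : k ≤ n)
    (s G : V n → ℝ) (hs : IsHomExt n θ ⊤ s G) (hcap : IsCapillaryF n θ G)
    (hτ : TauPos n θ G) :
    ∀ i : Fin (n + 1), i ≠ Fin.last n →
      ∫ ζ in capCap n θ,
        sigmaElem n k G (ζ + Real.cos θ • Etop n) * ζ i ∂μH[(n : ℝ)] = 0 := by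
  intro i hi
  obtain ⟨⟨U, hU, hUK, hG⟩, hhom, -⟩ := hs
  have hc : 0 < Real.cos θ := cos_pos_of_mem_Ioo ⟨by linarith [hθ.1, pi_pos], hθ.2⟩
  have hc1 : Real.cos θ < 1 := by
    rw [← cos_zero]
    exact cos_lt_cos_of_nonneg_of_le_pi_div_two le_rfl hθ.2.le hθ.1
  have hpolar : ∀ x ∈ circCone n (Real.cos θ), 0 < ‖x‖ ∧ ‖x‖⁻¹ • x ∈ sphCap n θ := by
    intro x hx
    have hx0 : 0 < ‖x‖ := by
      rw [norm_pos_iff]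
      rintro rfl
      simpa using hx.1
    refine ⟨hx0, ?_, ?_⟩
    · rw [norm_smul, norm_inv, norm_norm, inv_mul_cancel₀ hx0.ne']
    · rw [PiLp.smul_apply, smul_eq_mul, inv_mul_eq_div, le_div_iff₀ hx0]
      exact hx.2
  have hUK' : circCone n (Real.cos θ) ⊆ U := by
    intro x hx
    obtain ⟨hx0, hu⟩ := hpolar x hx
    exact hUK ⟨‖x‖, hx0, _, hu, (smul_inv_smul₀ hx0.ne' x).symm⟩
  have hhom' : ∀ r : ℝ, 0 < r → ∀ x ∈ circCone n (Real.cos θ), G (r • x) = r * G x := by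
    intro r hr x hx
    obtain ⟨hx0, hu⟩ := hpolar x hx
    have h1 := hhom _ hx0 _ hu
    have h2 := hhom _ (mul_pos hr hx0) _ hu
    rw [smul_inv_smul₀ hx0.ne'] at h1
    rw [mul_smul, smul_inv_smul₀ hx0.ne'] at h2
    rw [h1, h2, mul_assoc]
  have hG3 : ContDiffOn ℝ 3 G U := hG.of_le (WithTop.coe_le_coe.2 (le_top : (3 : ℕ∞) ≤ ⊤))
  have h := integral_capCap_eq_zero n θ (fun u => sigmaElem n k G u * u i)
    (setIntegral_sigmaElem_mul_coord_eq_zero hc hc1 hU hUK' hG3 hhom'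
      (fun u hu hul => hcap u ⟨hu, hul⟩) hi hkn)
  simpa [Etop, hi] using h
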